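/- arXiv:1903.09638 — 5 statements merged into one kernel-verified Lean document; each statement's English description precedes it below -/
import Mathlib

section
/- Let Q ≥ 1 be a real number and n an integer. Then δ(n=0) = 2 Re ∫_0^1 Σ_{1 ≤ q ≤ Q} Σ_{Q < a ≤ q+Q, gcd(a,q)=1} (1/(aq)) · e(n·ā/q − n·x/(aq)) dx, where δ(n=0) equals 1 if n = 0 and 0 otherwise, the sums run over integers q with 1 ≤ q ≤ Q and integers a with Q < a ≤ q + Q coprime to q, and ā denotes any integer with a·ā ≡ 1 (mod q). -/
open Complex Real

noncomputable def e (x : ℝ) : ℂ := Complex.exp (2 * Real.pi * Complex.I * x)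

/-! The mediant `(c + x) / (m + r)` splits the interval between two Farey neighbours `c / m < x / r`
into two intervals of the same kind. Starting from a half period of a `1`-periodic function and
splitting, at stage `N`, all intervals in which the larger denominator is `N + 1`, one reaches
intervals indexed by the coprime pairs `(q, a)` with `q ≤ N < a ≤ q + N`. If the function is even,
an interval may be reflected so that the endpoint with the smaller denominator `q` is its right end
`b / q`; then `a b ≡ 1 (mod q)`, and periodicity makes the integral depend only on `b` modulo `q`.
Kloosterman's identity is the case of the function `Re e(n t)`. -/

open MeasureTheory Finset

/-- The index set of Kloosterman's dissection of order `N`: pairs `⟨q, a⟩` of coprime integers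
with `1 ≤ q ≤ N < a ≤ q + N`. -/
noncomputable def kloostermanPairs (N : ℤ) : Finset (Σ _ : ℤ, ℤ) :=
  (Icc 1 N).sigma fun q ↦ {a ∈ Icc (N + 1) (q + N) | Int.gcd a q = 1}

section Mediant

variable {M : Type*} [AddCommMonoid M]

theorem sum_Icc_add_one_right (f : ℤ → M) {a b : ℤ} (h : a ≤ b + 1) :
    ∑ x ∈ Icc a (b + 1), f x = ∑ x ∈ Icc a b, f x + f (b + 1) := by
  rw [← insert_Icc_right_eq_Icc_add_one h, sum_insert (by simp), add_comm]

theorem sum_Icc_eq_sum_Icc_add_one_left (f : ℤ → M) {a b : ℤ} (h : a ≤ b) :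
    ∑ x ∈ Icc a b, f x = ∑ x ∈ Icc (a + 1) b, f x + f a := by
  rw [← insert_Icc_add_one_left_eq_Icc h, sum_insert (by simp), add_comm]

theorem sum_Icc_sum_Icc_add_one_of_mediant {G : ℤ → ℤ → M}
    (hG : ∀ r m : ℤ, 1 ≤ r → 1 ≤ m → G r m = G r (m + r) + G m (m + r))
    (hdiag : ∀ m : ℤ, 2 ≤ m → G m (m + m) = 0) {N : ℤ} (hN : 1 ≤ N) :
    ∑ q ∈ Icc 1 (N + 1), ∑ a ∈ Icc (N + 1 + 1) (q + (N + 1)), G q a =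
      ∑ q ∈ Icc 1 N, ∑ a ∈ Icc (N + 1) (q + N), G q a := by
  have new_row : ∑ a ∈ Icc (N + 1 + 1) (N + 1 + (N + 1)), G (N + 1) a =
      ∑ q ∈ Icc 1 N, G (N + 1) (N + 1 + q) := by
    rw [← image_add_left_Icc, sum_image (by simp), sum_Icc_add_one_right _ (by lia),
      hdiag _ (by lia), add_zero]
  have old_row (q : ℤ) (hq : q ∈ Icc 1 N) :
      ∑ a ∈ Icc (N + 1 + 1) (q + (N + 1)), G q a + G (N + 1) (N + 1 + q) =
        ∑ a ∈ Icc (N + 1) (q + N), G q a := by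
    have hq1 : 1 ≤ q := (mem_Icc.mp hq).1
    rw [sum_Icc_eq_sum_Icc_add_one_left _ (by lia : N + 1 ≤ q + N), hG q (N + 1) hq1 (by lia),
      ← add_assoc q, sum_Icc_add_one_right _ (by lia), add_assoc (∑ a ∈ _, _),
      show q + N + 1 = N + 1 + q by ring]
  rw [sum_Icc_add_one_right _ (by lia), new_row, ← sum_add_distrib]
  exact sum_congr rfl old_row

theorem sum_kloostermanPairs_of_mediant {F : ℤ → ℤ → M}
    (hF : ∀ r m : ℤ, 1 ≤ r → 1 ≤ m → Int.gcd m r = 1 → F r m = F r (m + r) + F m (m + r))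
    {N : ℤ} (hN : 1 ≤ N) :
    ∑ p ∈ kloostermanPairs N, F p.1 p.2 = F 1 2 := by
  simp only [kloostermanPairs, sum_sigma, sum_filter]
  induction N, hN using Int.leInduction with
  | base => simp
  | succ N hN ih =>
    rw [← ih]
    refine sum_Icc_sum_Icc_add_one_of_mediant (G := fun q a ↦ if Int.gcd a q = 1 then F q a else 0)
      (fun r m hr hm ↦ ?_) (fun m hm ↦ ?_) hN
    · have hgcd : Int.gcd (m + r) m = Int.gcd m r := by simp [Int.gcd_comm]
      simp only [Int.gcd_add_self_left, hgcd]
      split_ifs with h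
      · exact hF r m hr hm h
      · rw [add_zero]
    · simp only [Int.gcd_add_self_left, Int.gcd_self]
      exact if_neg (by lia)

end Mediant

theorem modEq_of_mul_modEq_one {q a b c : ℤ} (hb : a * b ≡ 1 [ZMOD q]) (hc : a * c ≡ 1 [ZMOD q]) :
    b ≡ c [ZMOD q] :=
  calc
    b = 1 * b := (one_mul b).symm
    _ ≡ a * c * b [ZMOD q] := hc.symm.mul_right b
    _ = a * b * c := mul_right_comm a c b
    _ ≡ 1 * c [ZMOD q] := hb.mul_right c
    _ = c := one_mul c

section Arc

variable {E : Type*} [NormedAddCommGroup E] {f : ℝ → E}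

theorem intervalIntegrable_comp_sub_mul {c d s t : ℝ}
    (hint : IntervalIntegrable f volume (d - c * s) (d - c * t)) :
    IntervalIntegrable (fun x ↦ f (d - c * x)) volume s t := by
  obtain rfl | hc := eq_or_ne c 0
  · simp
  · simpa [hc] using (hint.comp_sub_left d).comp_mul_left (c := c)

variable [NormedSpace ℝ E]

/-- The integral of `f` over the interval of length `1 / (a q)` to the left of `b / q`. When
`a b ≡ 1 (mod q)` this is the interval between a fraction with denominator `a` and `b / q`. -/
noncomputable def arcIntegral (f : ℝ → E) (q a b : ℤ) : E :=
  ∫ t in (b / q - 1 / (a * q) : ℝ)..(b / q), f t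

theorem integral_smul_comp_sub_mul_eq_arcIntegral (f : ℝ → E) (q a b : ℤ) :
    ∫ x in (0 : ℝ)..1, (1 / (a * q) : ℝ) • f (b / q - 1 / (a * q) * x) = arcIntegral f q a b := by
  rw [intervalIntegral.integral_smul, intervalIntegral.smul_integral_comp_sub_mul, mul_one,
    mul_zero, sub_zero, arcIntegral]

theorem arcIntegral_eq_integral {q a b c : ℤ} (hq : q ≠ 0) (ha : a ≠ 0) (h : a * b - q * c = 1) :
    arcIntegral f q a b = ∫ t in (c / a : ℝ)..(b / q), f t := by
  have left_end : (b / q - 1 / (a * q) : ℝ) = c / a := by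
    have h' : (a * b - q * c : ℝ) = 1 := mod_cast h
    field_simp
    linear_combination h'
  rw [arcIntegral, left_end]

theorem arcIntegral_congr (hper : Function.Periodic f 1) {q b b' : ℤ} (a : ℤ)
    (h : b ≡ b' [ZMOD q]) : arcIntegral f q a b = arcIntegral f q a b' := by
  obtain rfl | hq := eq_or_ne q 0
  · simp [arcIntegral]
  obtain ⟨k, hk⟩ := h.symm.dvd
  have hshift : (b / q : ℝ) = b' / q + k := by
    have hk' : (b - b' : ℝ) = q * k := mod_cast hk
    field_simp
    linear_combination hk'
  have hperk (t : ℝ) : f (t + k) = f t := by simpa using hper.int_mul k t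
  rw [arcIntegral, arcIntegral, hshift, add_sub_right_comm,
    ← intervalIntegral.integral_comp_add_right]
  simp only [hperk]

theorem integral_neg_neg_of_even (heven : Function.Even f) (a b : ℝ) :
    ∫ t in -b..-a, f t = ∫ t in a..b, f t := by
  rw [← intervalIntegral.integral_comp_neg]
  simp only [heven _]

theorem arcIntegral_mediant (hper : Function.Periodic f 1) (heven : Function.Even f)
    (hint : ∀ s t, IntervalIntegrable f volume s t) {r m x y z : ℤ}
    (hr : r ≠ 0) (hm : m ≠ 0) (hmr : m + r ≠ 0) (hx : m * x ≡ 1 [ZMOD r])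
    (hy : (m + r) * y ≡ 1 [ZMOD r]) (hz : (m + r) * z ≡ 1 [ZMOD m]) :
    arcIntegral f r m x = arcIntegral f r (m + r) y + arcIntegral f m (m + r) z := by
  obtain ⟨c, hc⟩ := hx.symm.dvd
  have hyx : y ≡ x [ZMOD r] :=
    modEq_of_mul_modEq_one hy (Int.modEq_iff_dvd.mpr ⟨-(c + x), by linear_combination -hc⟩)
  have hzc : z ≡ -c [ZMOD m] :=
    modEq_of_mul_modEq_one hz (Int.modEq_iff_dvd.mpr ⟨c + x, by linear_combination -hc⟩)
  have right_part : arcIntegral f r (m + r) y = ∫ t in ((c + x) / (m + r) : ℝ)..(x / r), f t := by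
    rw [arcIntegral_congr hper _ hyx, arcIntegral_eq_integral (c := c + x) hr hmr (by
      linear_combination hc)]
    push_cast
    rfl
  have left_part :
      arcIntegral f m (m + r) z = ∫ t in (c / m : ℝ)..((c + x) / (m + r)), f t := by
    rw [arcIntegral_congr hper _ hzc, arcIntegral_eq_integral (c := -(c + x)) hm hmr (by
      linear_combination hc), ← integral_neg_neg_of_even heven]
    push_cast
    simp only [neg_div, neg_neg]
  rw [arcIntegral_eq_integral (c := c) hr hm (by linear_combination hc), right_part, left_part,
    add_comm, intervalIntegral.integral_add_adjacent_intervals (hint _ _) (hint _ _)]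

theorem two_smul_arcIntegral_one_two (hper : Function.Periodic f 1) (heven : Function.Even f)
    (hint : ∀ s t, IntervalIntegrable f volume s t) (b : ℤ) :
    (2 : ℝ) • arcIntegral f 1 2 b = ∫ t in (0 : ℝ)..1, f t := by
  have hleft : arcIntegral f 1 2 b = ∫ t in (-(1 / 2) : ℝ)..0, f t := by
    rw [arcIntegral_congr hper 2 (Int.modEq_one : b ≡ 0 [ZMOD 1])]
    norm_num [arcIntegral]
  have hright : ∫ t in (0 : ℝ)..(1 / 2), f t = arcIntegral f 1 2 b := by
    rw [hleft, ← integral_neg_neg_of_even heven, neg_zero]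
  calc
    (2 : ℝ) • arcIntegral f 1 2 b
      = (∫ t in (-(1 / 2) : ℝ)..0, f t) + ∫ t in (0 : ℝ)..(1 / 2), f t := by
        rw [two_smul, hright, hleft]
    _ = ∫ t in (-(1 / 2) : ℝ)..(-(1 / 2) + 1), f t := by
        rw [intervalIntegral.integral_add_adjacent_intervals (hint _ _) (hint _ _)]
        norm_num
    _ = ∫ t in (0 : ℝ)..1, f t := by
        rw [hper.intervalIntegral_add_eq _ 0, zero_add]

theorem integral_eq_two_smul_integral_sum_kloostermanPairs (hper : Function.Periodic f 1)
    (heven : Function.Even f) (hint : IntervalIntegrable f volume 0 1) {inv : ℤ → ℤ → ℤ}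
    (hinv : ∀ q a : ℤ, 1 ≤ q → Int.gcd a q = 1 → a * inv q a ≡ 1 [ZMOD q])
    {N : ℤ} (hN : 1 ≤ N) :
    ∫ t in (0 : ℝ)..1, f t =
      (2 : ℝ) • ∫ x in (0 : ℝ)..1, ∑ p ∈ kloostermanPairs N,
        (1 / (p.2 * p.1) : ℝ) • f (inv p.1 p.2 / p.1 - 1 / (p.2 * p.1) * x) := by
  have hint' := hper.intervalIntegrable₀ one_ne_zero hint
  have mediant (r m : ℤ) (hr : 1 ≤ r) (hm : 1 ≤ m) (h : Int.gcd m r = 1) :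
      arcIntegral f r m (inv r m) =
        arcIntegral f r (m + r) (inv r (m + r)) + arcIntegral f m (m + r) (inv m (m + r)) :=
    arcIntegral_mediant hper heven hint' (by lia) (by lia) (by lia) (hinv r m hr h)
      (hinv r (m + r) hr (by simpa using h)) (hinv m (m + r) hm (by simpa [Int.gcd_comm] using h))
  have harc (p : Σ _ : ℤ, ℤ) : IntervalIntegrable (fun x : ℝ ↦
      (1 / (p.2 * p.1) : ℝ) • f (inv p.1 p.2 / p.1 - 1 / (p.2 * p.1) * x)) volume 0 1 :=
    (intervalIntegrable_comp_sub_mul (hint' _ _)).smul _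
  rw [intervalIntegral.integral_finsetSum fun p _ ↦ harc p]
  simp only [integral_smul_comp_sub_mul_eq_arcIntegral]
  rw [sum_kloostermanPairs_of_mediant mediant hN, two_smul_arcIntegral_one_two hper heven hint']

end Arc

section AdditiveCharacter

@[fun_prop]
theorem continuous_e : Continuous e := by
  unfold e
  fun_prop

theorem e_periodic : Function.Periodic e 1 := fun x ↦ by
  rw [e, e, ← Complex.exp_periodic (2 * π * I * x)]
  push_cast
  ring_nf

theorem e_neg (x : ℝ) : e (-x) = starRingEnd ℂ (e x) := by
  simp [e, ← Complex.exp_conj, map_ofNat]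

theorem integral_e_int_mul (n : ℤ) :
    ∫ t in (0 : ℝ)..1, e (n * t) = if n = 0 then 1 else 0 := by
  split_ifs with hn
  · simp [hn, e]
  · have hc : (2 * π * I * n : ℂ) ≠ 0 := by simp [hn, Real.pi_ne_zero]
    calc
      ∫ t in (0 : ℝ)..1, e (n * t) = ∫ t in (0 : ℝ)..1, exp (2 * π * I * n * t) := by
        simp [e, mul_assoc]
      _ = 0 := by
        rw [integral_exp_mul_complex hc]
        simp [mul_comm _ (n : ℂ), Complex.exp_int_mul_two_pi_mul_I]

theorem integral_re_e_int_mul (n : ℤ) :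
    ∫ t in (0 : ℝ)..1, (e (n * t)).re = if n = 0 then 1 else 0 := by
  have hint : IntervalIntegrable (fun t : ℝ ↦ e (n * t)) volume 0 1 :=
    Continuous.intervalIntegrable (by fun_prop) 0 1
  calc
    ∫ t in (0 : ℝ)..1, (e (n * t)).re = (∫ t in (0 : ℝ)..1, e (n * t)).re :=
      reCLM.intervalIntegral_comp_comm hint
    _ = if n = 0 then 1 else 0 := by
      rw [integral_e_int_mul, apply_ite re, one_re, zero_re]

theorem periodic_re_e_int_mul (n : ℤ) : Function.Periodic (fun t : ℝ ↦ (e (n * t)).re) 1 :=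
  fun t ↦ by simpa [mul_add] using congrArg re (e_periodic.int_mul n (n * t))

theorem even_re_e_mul (c : ℝ) : Function.Even fun t : ℝ ↦ (e (c * t)).re :=
  fun t ↦ by simp only [mul_neg, e_neg, conj_re]

theorem re_sum_mul_e (N n : ℤ) (inv : ℤ → ℤ → ℤ) (x : ℝ) :
    (∑ q ∈ Icc 1 N, ∑ a ∈ Icc (N + 1) (q + N) with Int.gcd a q = 1, (1 / ((a : ℂ) * (q : ℂ))) *
      e ((n : ℝ) * (inv q a : ℝ) / (q : ℝ) - (n : ℝ) * x / ((a : ℝ) * (q : ℝ)))).re =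
    ∑ p ∈ kloostermanPairs N,
      (1 / (p.2 * p.1) : ℝ) • (e (n * (inv p.1 p.2 / p.1 - 1 / (p.2 * p.1) * x))).re := by
  simp only [kloostermanPairs, sum_sigma, re_sum]
  refine sum_congr rfl fun q _ ↦ sum_congr rfl fun a _ ↦ ?_
  rw [smul_eq_mul, ← re_ofReal_mul]
  push_cast
  ring_nf

end AdditiveCharacter

/-- Kloosterman's version of the circle method: for a real `Q ≥ 1` and an integer `n`,
`δ(n=0) = 2 Re ∫_0^1 Σ_{1 ≤ q ≤ Q} Σ_{Q < a ≤ q+Q, (a,q)=1} (1/(aq)) e(n·ā/q − n·x/(aq)) dx`,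
where `ā` is any inverse of `a` modulo `q`. -/
theorem stmt1 (Q : ℝ) (hQ : 1 ≤ Q) (n : ℤ) (inv : ℤ → ℤ → ℤ)
    (hinv : ∀ q a : ℤ, 1 ≤ q → Int.gcd a q = 1 → (a * inv q a) % q = 1 % q) :
    (if n = 0 then (1:ℝ) else 0) =
      2 * (∫ x in (0:ℝ)..1,
        ∑ q ∈ Finset.Icc 1 ⌊Q⌋,
          ∑ a ∈ (Finset.Icc (⌊Q⌋ + 1) (q + ⌊Q⌋)).filter (fun a => Int.gcd a q = 1),
            (1 / ((a : ℂ) * (q : ℂ))) *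
              e ((n : ℝ) * (inv q a : ℝ) / (q : ℝ) - (n : ℝ) * x / ((a : ℝ) * (q : ℝ)))).re := by
  have hN : 1 ≤ ⌊Q⌋ := Int.le_floor.mpr (mod_cast hQ)
  have hint : IntervalIntegrable (fun t : ℝ ↦ (e (n * t)).re) volume 0 1 :=
    Continuous.intervalIntegrable (by fun_prop) 0 1
  rw [← integral_re_e_int_mul, integral_eq_two_smul_integral_sum_kloostermanPairs
    (periodic_re_e_int_mul n) (even_re_e_mul n) hint hinv hN, smul_eq_mul]
  simp only [← re_sum_mul_e]
  congr 1
  exact reCLM.intervalIntegral_comp_comm (Continuous.intervalIntegrable (by fun_prop) 0 1)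
end

section
/- Let [a,b] ⊂ (0,∞) and let U : ℝ → ℝ be a smooth function supported in [a,b] with |U^{(j)}(x)| ≤ K_j for all j ≥ 0 and all x. Fix σ ∈ ℝ. Then there is a constant C, depending only on a, b, σ and finitely many of the K_j, such that for all real r ≠ 0 and all real β ≠ 0, writing s = σ + iβ and U†(r,s) = ∫_0^∞ U(x) e(−rx) x^{s−1} dx, one has |U†(r,s) − (√(2π) e(1/8)/√(−β)) · (β/(2πer))^{iβ} · U₀(σ, β/(2πr))| ≤ C · min{|β|^{−3/2}, |r|^{−3/2}}, where U₀(σ,x) = x^σ U(x) and √(−β) denotes the principal branch of the complex square root (so √(−β) = i√β when β > 0). -/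
open Complex Real

/-- The Fourier–Mellin transform `U†(r,s) = ∫_0^∞ U(x) e(−rx) x^{s−1} dx`. -/
noncomputable def Udag (U : ℝ → ℝ) (r : ℝ) (s : ℂ) : ℂ :=
  ∫ x in Set.Ioi (0:ℝ), (U x : ℂ) * e (-(r * x)) * (x : ℂ) ^ (s - 1)

/-!
The substitution `x = exp t` turns `U†(r, σ + iβ)` into an oscillatory integral with phase
`βt - 2πr exp t` and amplitude `U₀(σ, exp t)`; the only possible stationary point is
`τ = log (β / 2πr)`.

If `β / 2πr` stays away from `[a, b]`, the main term vanishes and the derivative of the phase is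
`≫ max (|β|, |r|)` on the support, so the trivial bound and two integrations by parts give
`O(min (1, max (|β|, |r|)⁻²))`, which is `O(max (|β|, |r|) ^ (-3/2))`. Otherwise `|r| ≪ |β|`, and
translation by `τ` makes the phase a constant minus `β (exp u - 1 - u)`. Since `exp u - 1 - u` is
strictly convex, it has a global Morse coordinate, in which the phase is exactly quadratic.

For a quadratic phase, write the oscillatory factor as the Gaussian `exp (-πbx²)` with
`b = iβ/2π`, a limit of Gaussians with `Re b > 0`. Parseval's identity gives
`∫ exp (-πbx²) h = b ^ (-1/2) ∫ exp (-πξ²/b) 𝓕 h`, and replacing `exp (-πξ²/b)` by `1` produces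
`b ^ (-1/2) h(0)`, by Fourier inversion, up to `O(|b| ^ (-3/2) ∫ ξ² |𝓕 h|)`.
-/

open scoped ContDiff FourierTransform Pointwise
open Filter Topology MeasureTheory Set

section MorseCoordinate

theorem analyticAt_dslope {𝕜 E : Type*} [NontriviallyNormedField 𝕜] [NormedAddCommGroup E]
    [NormedSpace 𝕜 E] {f : 𝕜 → E} {a b : 𝕜} (ha : AnalyticAt 𝕜 f a) (hb : AnalyticAt 𝕜 f b) :
    AnalyticAt 𝕜 (dslope f a) b := by
  rcases eq_or_ne b a with rfl | hba
  · obtain ⟨p, hp⟩ := ha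
    exact hp.has_fpower_series_dslope_fslope.analyticAt
  · refine AnalyticAt.congr ?_ (dslope_eventuallyEq_slope_of_ne f hba).symm
    exact ((analyticAt_id.sub analyticAt_const).inv (sub_ne_zero.2 hba)).smul
      (hb.sub analyticAt_const)

theorem tangent_le_of_convexOn {f : ℝ → ℝ} {f' x : ℝ} (hf : ConvexOn ℝ univ f)
    (hx : HasDerivAt f f' x) (y : ℝ) : f x + f' * (y - x) ≤ f y := by
  rcases lt_trichotomy x y with hxy | rfl | hxy
  · have hslope := hf.le_slope_of_hasDerivAt (mem_univ x) (mem_univ y) hxy hx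
    rw [slope_def_field, le_div_iff₀ (sub_pos.2 hxy)] at hslope
    linarith
  · simp
  · have hslope := hf.slope_le_of_hasDerivAt (mem_univ y) (mem_univ x) hxy hx
    rw [slope_def_field, div_le_iff₀ (sub_pos.2 hxy)] at hslope
    linarith

theorem lt_of_strictConvexOn_of_hasDerivAt_zero {f : ℝ → ℝ} {x y : ℝ}
    (hf : StrictConvexOn ℝ univ f) (hx : HasDerivAt f 0 x) (hyx : y ≠ x) : f x < f y := by
  have hmin : ∀ z, f x ≤ f z := fun z => by simpa using tangent_le_of_convexOn hf.convexOn hx z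
  refine (hmin y).lt_of_ne fun hxy => hyx ?_
  exact hf.eq_of_isMinOn (fun z _ => (hxy ▸ hmin z : f y ≤ f z)) (fun z _ => hmin z)
    (mem_univ y) (mem_univ x)

theorem tendsto_atTop_of_convexOn {f : ℝ → ℝ} {f' x : ℝ} (hf : ConvexOn ℝ univ f)
    (hx : HasDerivAt f f' x) (hf' : 0 < f') : Tendsto f atTop atTop :=
  tendsto_atTop_mono (tangent_le_of_convexOn hf hx) <| tendsto_atTop_add_const_left _ _ <|
    (tendsto_atTop_add_const_right _ (-x) tendsto_id).const_mul_atTop hf'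

theorem tendsto_atBot_of_convexOn {f : ℝ → ℝ} {f' x : ℝ} (hf : ConvexOn ℝ univ f)
    (hx : HasDerivAt f f' x) (hf' : f' < 0) : Tendsto f atBot atTop :=
  tendsto_atTop_mono (tangent_le_of_convexOn hf hx) <| tendsto_atTop_add_const_left _ _ <|
    (tendsto_atBot_add_const_right _ (-x) tendsto_id).const_mul_atBot_of_neg hf'

variable {f : ℝ → ℝ}

theorem exists_contDiff_eq_sq_div_two_mul (hf : ∀ t, AnalyticAt ℝ f t) (h0 : f 0 = 0)
    (h1 : deriv f 0 = 0) :
    ∃ p : ℝ → ℝ, ContDiff ℝ ∞ p ∧ (∀ t, f t = t ^ 2 / 2 * p t) ∧ p 0 = deriv (deriv f) 0 := by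
  set h : ℝ → ℝ := dslope f 0 with h_def
  have hh : ∀ t, AnalyticAt ℝ h t := fun t => analyticAt_dslope (hf 0) (hf t)
  have hfh : ∀ t, f t = t * h t := fun t => by
    simpa using (sub_smul_dslope_of_zero h0 t).symm
  have hh0 : h 0 = 0 := by rw [h_def, dslope_same, h1]
  have hhd : ∀ t, h t = t * dslope h 0 t := fun t => by
    simpa using (sub_smul_dslope_of_zero hh0 t).symm
  have hderiv : deriv f = fun t => h t + t * deriv h t := by
    funext t
    rw [funext hfh]
    exact ((hasDerivAt_id' t).mul (hh t).differentiableAt.hasDerivAt).deriv.trans (by ring)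
  refine ⟨fun t => 2 * dslope h 0 t, ?_, fun t => by rw [hfh, hhd]; ring, ?_⟩
  · exact contDiff_const.mul <| contDiff_iff_contDiffAt.2 fun t =>
      (analyticAt_dslope (hh 0) (hh t)).contDiffAt
  · simp only [hderiv, dslope_same]
    have hsum := (hh 0).differentiableAt.hasDerivAt.add
      ((hasDerivAt_id' (0 : ℝ)).mul (hh 0).deriv.differentiableAt.hasDerivAt)
    exact (hsum.deriv.trans (by ring)).symm

theorem exists_contDiff_sq_eq_two_mul (hf : ∀ t, AnalyticAt ℝ f t) (h0 : f 0 = 0)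
    (h1 : deriv f 0 = 0) (h2 : ∀ t, 0 < deriv (deriv f) t) :
    ∃ q : ℝ → ℝ, ContDiff ℝ ∞ q ∧ (∀ t, q t ^ 2 = 2 * f t) ∧ (∀ t, 0 < t → 0 < q t) ∧
      (∀ t, t < 0 → q t < 0) ∧ 0 < deriv q 0 := by
  obtain ⟨p, hp, hfp, hp0⟩ := exists_contDiff_eq_sq_div_two_mul hf h0 h1
  have hconv : StrictConvexOn ℝ univ f := strictConvexOn_univ_of_deriv2_pos
    (continuous_iff_continuousAt.2 fun t => (hf t).continuousAt) h2
  have hp_pos : ∀ t, 0 < p t := fun t => by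
    rcases eq_or_ne t 0 with rfl | ht
    · exact hp0 ▸ h2 0
    · have hft : 0 < f t := h0 ▸ lt_of_strictConvexOn_of_hasDerivAt_zero hconv
        (by simpa only [h1] using (hf 0).differentiableAt.hasDerivAt) ht
      exact pos_of_mul_pos_right (hfp t ▸ hft) (by positivity)
  set s : ℝ → ℝ := fun t => √(p t)
  have hs : ContDiff ℝ ∞ s := hp.sqrt fun t => (hp_pos t).ne'
  have hs_pos : ∀ t, 0 < s t := fun t => Real.sqrt_pos.2 (hp_pos t)
  refine ⟨fun t => t * s t, contDiff_id.mul hs, fun t => ?_, fun t ht => mul_pos ht (hs_pos t),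
    fun t ht => mul_neg_of_neg_of_pos ht (hs_pos t), ?_⟩
  · rw [mul_pow, Real.sq_sqrt (hp_pos t).le, hfp]
    ring
  · have hderiv := (hasDerivAt_id' (0 : ℝ)).fun_mul (hs.differentiable (by simp) 0).hasDerivAt
    simpa [hderiv.deriv] using hs_pos 0

theorem surjective_of_sq_eq_two_mul {q : ℝ → ℝ} (hq : Continuous q)
    (hqf : ∀ t, q t ^ 2 = 2 * f t) (hq_pos : ∀ t, 0 < t → 0 < q t) (hq_neg : ∀ t, t < 0 → q t < 0)
    (hf_top : Tendsto f atTop atTop) (hf_bot : Tendsto f atBot atTop) : Function.Surjective q := by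
  refine hq.surjective ?_ ?_
  · refine (Real.tendsto_sqrt_atTop.comp (hf_top.const_mul_atTop two_pos)).congr' ?_
    filter_upwards [eventually_gt_atTop 0] with t ht
    rw [Function.comp_apply, ← hqf, Real.sqrt_sq (hq_pos t ht).le]
  · refine (tendsto_neg_atTop_atBot.comp
      (Real.tendsto_sqrt_atTop.comp (hf_bot.const_mul_atTop two_pos))).congr' ?_
    filter_upwards [eventually_lt_atBot 0] with t ht
    rw [Function.comp_apply, Function.comp_apply, ← hqf, Real.sqrt_sq_eq_abs,
      abs_of_neg (hq_neg t ht), neg_neg]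

/-- `T` is a Morse coordinate for `f` at `0`: an increasing smooth reparametrisation of the line
which fixes the critical point `0` and turns the phase `f` into the quadratic phase `u ^ 2 / 2`. -/
structure IsMorseCoordinate (f T : ℝ → ℝ) : Prop where
  contDiff : ContDiff ℝ ∞ T
  strictMono : StrictMono T
  surjective : Function.Surjective T
  map_zero : T 0 = 0
  apply_eq : ∀ u, f (T u) = u ^ 2 / 2

theorem exists_isMorseCoordinate (hf : ∀ t, AnalyticAt ℝ f t) (h0 : f 0 = 0)
    (h1 : deriv f 0 = 0) (h2 : ∀ t, 0 < deriv (deriv f) t) :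
    ∃ T, IsMorseCoordinate f T := by
  obtain ⟨q, hq, hqf, hq_pos, hq_neg, hq0⟩ := exists_contDiff_sq_eq_two_mul hf h0 h1 h2
  have hqd : ∀ t, HasDerivAt q (deriv q t) t := fun t =>
    (hq.differentiable (by simp) t).hasDerivAt
  have hfd : ∀ t, HasDerivAt f (deriv f t) t := fun t => (hf t).differentiableAt.hasDerivAt
  have hf'_mono : StrictMono (deriv f) := strictMono_of_deriv_pos h2
  have hqq' : ∀ t, q t * deriv q t = deriv f t := fun t => by
    have hsq : HasDerivAt (fun t => q t ^ 2) (2 * deriv f t) t :=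
      (funext hqf : (fun t => q t ^ 2) = _) ▸ (hfd t).const_mul 2
    have := ((hqd t).fun_pow 2).unique hsq
    norm_num at this
    linarith
  have hq'_pos : ∀ t, 0 < deriv q t := fun t => by
    rcases lt_trichotomy t 0 with ht | rfl | ht
    · have : deriv f t < 0 := h1 ▸ hf'_mono ht
      exact pos_of_mul_neg_right (hqq' t ▸ this) (hq_neg t ht).le
    · exact hq0
    · have : 0 < deriv f t := h1 ▸ hf'_mono ht
      exact pos_of_mul_pos_right (hqq' t ▸ this) (hq_pos t ht).le
  have hconv : ConvexOn ℝ univ f := (hf'_mono.strictConvexOn_univ_of_deriv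
    (continuous_iff_continuousAt.2 fun t => (hf t).continuousAt)).convexOn
  have hq_surj : Function.Surjective q := surjective_of_sq_eq_two_mul hq.continuous hqf
    hq_pos hq_neg
    (tendsto_atTop_of_convexOn hconv (hfd 1) (h1 ▸ hf'_mono one_pos))
    (tendsto_atBot_of_convexOn hconv (hfd (-1)) (h1 ▸ hf'_mono neg_one_lt_zero))
  have hq_mono : StrictMono q := strictMono_of_deriv_pos hq'_pos
  have hq_zero : q 0 = 0 := by simpa [h0] using hqf 0
  let o := hq_mono.orderIsoOfSurjective q hq_surj
  have hq_symm : ∀ u, q (o.symm u) = u := hq_mono.orderIsoOfSurjective_self_symm_apply q hq_surj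
  exact ⟨o.symm,
    o.toHomeomorph.contDiff_symm_deriv (fun t => (hq'_pos t).ne') hqd hq, o.symm.strictMono,
    o.symm.surjective, hq_mono.injective (by rw [hq_symm, hq_zero]), fun u => by
      linarith [hqf (o.symm u), congrArg (· ^ 2) (hq_symm u)]⟩

theorem IsMorseCoordinate.deriv_deriv_mul_sq {T : ℝ → ℝ} (hT : IsMorseCoordinate f T)
    (hf : ContDiff ℝ 2 f) (h1 : deriv f 0 = 0) : deriv (deriv f) 0 * deriv T 0 ^ 2 = 1 := by
  have hTd : ∀ u, HasDerivAt T (deriv T u) u := fun u =>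
    (hT.contDiff.differentiable (by simp) u).hasDerivAt
  have hTdd : HasDerivAt (deriv T) (deriv (deriv T) 0) 0 :=
    ((contDiff_infty_iff_deriv.1 hT.contDiff).2.differentiable (by simp) 0).hasDerivAt
  have hf'd : HasDerivAt (deriv f) (deriv (deriv f) 0) (T 0) := by
    rw [hT.map_zero]
    exact ((contDiff_succ_iff_deriv (n := 1).1 hf).2.2.differentiable one_ne_zero 0).hasDerivAt
  have hchain : ∀ u, deriv f (T u) * deriv T u = u := fun u => by
    have hcomp := ((hf.differentiable two_ne_zero (T u)).hasDerivAt.comp u (hTd u))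
    rw [show f ∘ T = fun u => u ^ 2 / 2 from funext hT.apply_eq] at hcomp
    simpa using hcomp.unique ((hasDerivAt_pow 2 u).div_const 2)
  have hone := ((hf'd.comp 0 (hTd 0)).mul hTdd).unique
    ((funext hchain : (fun u => deriv f (T u) * deriv T u) = _) ▸ hasDerivAt_id' (0 : ℝ))
  simp only [Function.comp_apply, hT.map_zero, h1] at hone
  linear_combination hone

end MorseCoordinate

section Amplitude

variable {F : Type*} [NormedAddCommGroup F] [NormedSpace ℝ F] {n : ℕ} {s t : Set ℝ} {K : ℝ}
  {g : ℝ → F}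

/-- `g` is an amplitude of order `n` on `s` with bound `K`: a `C^n` weight supported in `s` all of
whose derivatives up to order `n` are bounded by `K`. All error terms below are linear in `K`. -/
structure IsAmplitude (n : ℕ) (s : Set ℝ) (K : ℝ) (g : ℝ → F) : Prop where
  contDiff : ContDiff ℝ n g
  tsupport_subset : tsupport g ⊆ s
  norm_iteratedDeriv_le : ∀ j ≤ n, ∀ x, ‖iteratedDeriv j g x‖ ≤ K

theorem exists_isAmplitude_of_norm_iteratedDeriv_le (n : ℕ) (s : Set ℝ) (K : ℕ → ℝ) :
    ∃ M > 0, ∀ g : ℝ → F, ContDiff ℝ n g → tsupport g ⊆ s →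
      (∀ j x, ‖iteratedDeriv j g x‖ ≤ K j) → IsAmplitude n s M g := by
  refine ⟨1 + ∑ j ∈ Finset.range (n + 1), |K j|, by positivity, fun g hg hsupp hK =>
    ⟨hg, hsupp, fun j hj x => (hK j x).trans ?_⟩⟩
  have hsum := Finset.single_le_sum (f := fun j => |K j|) (fun i _ => abs_nonneg (K i))
    (Finset.mem_range.2 (Nat.lt_succ_of_le hj))
  linarith [le_abs_self (K j)]

theorem exists_forall_norm_iteratedFDeriv_le {E : Type*} [NormedAddCommGroup E] [NormedSpace ℝ E]
    {s : Set E} {f : E → F} (hf : ContDiff ℝ n f) (hs : IsCompact s) :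
    ∃ M, 0 ≤ M ∧ ∀ j ≤ n, ∀ x ∈ s, ‖iteratedFDeriv ℝ j f x‖ ≤ M := by
  have hbdd : BddAbove (⋃ j ∈ Iic n, (fun x => ‖iteratedFDeriv ℝ j f x‖) '' s) :=
    (finite_Iic n).bddAbove_biUnion.2 fun j hj => hs.bddAbove_image
      (hf.continuous_iteratedFDeriv (by exact_mod_cast hj)).norm.continuousOn
  obtain ⟨M, hM⟩ := hbdd
  exact ⟨max M 0, le_max_right _ _, fun j hj x hx =>
    (hM (mem_biUnion hj (mem_image_of_mem _ hx))).trans (le_max_left _ _)⟩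

namespace IsAmplitude

theorem bound_nonneg (hg : IsAmplitude n s K g) : 0 ≤ K :=
  (norm_nonneg _).trans (hg.norm_iteratedDeriv_le 0 n.zero_le 0)

theorem mono_order {m : ℕ} (hg : IsAmplitude n s K g) (hmn : m ≤ n) : IsAmplitude m s K g :=
  ⟨hg.contDiff.of_le (by exact_mod_cast hmn), hg.tsupport_subset,
    fun j hj => hg.norm_iteratedDeriv_le j (hj.trans hmn)⟩

theorem eq_zero_of_notMem (hg : IsAmplitude n s K g) {x : ℝ} (hx : x ∉ s) : g x = 0 :=
  image_eq_zero_of_notMem_tsupport fun h => hx (hg.tsupport_subset h)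

theorem iteratedDeriv_eq_zero_of_notMem (hg : IsAmplitude n s K g) (j : ℕ) {x : ℝ} (hx : x ∉ s) :
    iteratedDeriv j g x = 0 := by
  rw [← norm_eq_zero, ← norm_iteratedFDeriv_eq_norm_iteratedDeriv, norm_eq_zero,
    ← Function.notMem_support]
  exact fun h => hx (hg.tsupport_subset (support_iteratedFDeriv_subset j h))

theorem hasCompactSupport (hg : IsAmplitude n s K g) (hs : IsCompact s) : HasCompactSupport g :=
  hs.of_isClosed_subset (isClosed_tsupport g) hg.tsupport_subset

theorem integrable_iteratedDeriv (hg : IsAmplitude n s K g) (hs : IsCompact s) {j : ℕ}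
    (hj : j ≤ n) : Integrable (iteratedDeriv j g) :=
  (hg.contDiff.continuous_iteratedDeriv j (by exact_mod_cast hj)).integrable_of_hasCompactSupport
    (HasCompactSupport.intro hs fun _ => hg.iteratedDeriv_eq_zero_of_notMem j)

theorem integral_norm_iteratedDeriv_le (hg : IsAmplitude n s K g) (hs : IsCompact s) {j : ℕ}
    (hj : j ≤ n) : ∫ x, ‖iteratedDeriv j g x‖ ≤ K * volume.real s := by
  rw [← setIntegral_eq_integral_of_forall_compl_eq_zero (s := s) fun x hx => by
    rw [hg.iteratedDeriv_eq_zero_of_notMem j hx, norm_zero]]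
  refine (Real.le_norm_self _).trans (norm_setIntegral_le_of_norm_le_const hs.measure_lt_top
    fun x _ => ?_)
  rw [norm_norm]
  exact hg.norm_iteratedDeriv_le j hj x

theorem ofReal {g : ℝ → ℝ} (hg : IsAmplitude n s K g) :
    IsAmplitude n s K (fun x => (g x : ℂ)) where
  contDiff := Complex.ofRealCLM.contDiff.comp hg.contDiff
  tsupport_subset := (tsupport_comp_subset Complex.ofReal_zero g).trans hg.tsupport_subset
  norm_iteratedDeriv_le j hj x := by
    rw [← norm_iteratedFDeriv_eq_norm_iteratedDeriv]
    refine (Complex.ofRealLI.norm_iteratedFDeriv_comp_left hg.contDiff.contDiffAt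
      (by exact_mod_cast hj)).trans_le ?_
    rw [norm_iteratedFDeriv_eq_norm_iteratedDeriv]
    exact hg.norm_iteratedDeriv_le j hj x

theorem comp_const_add (hg : IsAmplitude n s K g) (c : ℝ) :
    IsAmplitude n ((c + ·) ⁻¹' s) K (fun x => g (c + x)) where
  contDiff := hg.contDiff.comp (contDiff_const.add contDiff_id)
  tsupport_subset := (tsupport_comp_eq_preimage g (Homeomorph.addLeft c)).trans_subset
    (preimage_mono hg.tsupport_subset)
  norm_iteratedDeriv_le j hj x := by
    rw [iteratedDeriv_comp_const_add]
    exact hg.norm_iteratedDeriv_le j hj _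

theorem mono_set (hg : IsAmplitude n s K g) (hst : s ⊆ t) : IsAmplitude n t K g :=
  ⟨hg.contDiff, hg.tsupport_subset.trans hst, hg.norm_iteratedDeriv_le⟩

theorem exists_norm_iteratedFDeriv_comp_le {E : ℝ → ℝ} (hE : ContDiff ℝ n E)
    (ht : IsCompact t) :
    ∃ M, 0 ≤ M ∧ ∀ (g : ℝ → F) (K : ℝ), IsAmplitude n s K g → ∀ j ≤ n, ∀ x ∈ t,
      ‖iteratedFDeriv ℝ j (g ∘ E) x‖ ≤ M * K := by
  obtain ⟨S, hS0, hS⟩ := exists_forall_norm_iteratedFDeriv_le hE ht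
  refine ⟨n.factorial * (1 + S) ^ n, by positivity, fun g K hg j hj x hx => ?_⟩
  have hK := hg.bound_nonneg
  have hfaa := norm_iteratedFDeriv_comp_le hg.contDiff hE (n := j) (by exact_mod_cast hj) x
    (C := K) (D := 1 + S)
    (fun i hi => norm_iteratedFDeriv_eq_norm_iteratedDeriv.trans_le
      (hg.norm_iteratedDeriv_le i (hi.trans hj) _))
    (fun i hi1 hi => (hS i (hi.trans hj) x hx).trans <|
      (by linarith : S ≤ 1 + S).trans (le_self_pow₀ (by linarith) (by omega)))
  calc ‖iteratedFDeriv ℝ j (g ∘ E) x‖ ≤ j.factorial * K * (1 + S) ^ j := hfaa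
    _ ≤ n.factorial * K * (1 + S) ^ n := by
        gcongr
        linarith
    _ = n.factorial * (1 + S) ^ n * K := by ring

theorem exists_smul_comp {E W : ℝ → ℝ} (hE : ContDiff ℝ n E) (hW : ContDiff ℝ n W)
    (ht : IsCompact t) (hst : E ⁻¹' s ⊆ t) :
    ∃ M, 0 ≤ M ∧ ∀ (g : ℝ → F) (K : ℝ), IsAmplitude n s K g →
      IsAmplitude n t (M * K) (fun x => W x • g (E x)) := by
  obtain ⟨S, hS0, hS⟩ := exists_norm_iteratedFDeriv_comp_le (F := F) (s := s) hE ht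
  obtain ⟨V, hV0, hV⟩ := exists_forall_norm_iteratedFDeriv_le hW ht
  refine ⟨2 ^ n * (V * S), by positivity, fun g K hg => ?_⟩
  have hK := hg.bound_nonneg
  have hsupp : tsupport (fun x => W x • g (E x)) ⊆ t :=
    calc tsupport (fun x => W x • g (E x)) ⊆ tsupport (g ∘ E) := tsupport_smul_subset_right W _
      _ ⊆ E ⁻¹' tsupport g := closure_minimal (preimage_mono (f := E) (subset_tsupport g))
        ((isClosed_tsupport g).preimage hE.continuous)
      _ ⊆ t := (preimage_mono hg.tsupport_subset).trans hst
  refine ⟨hW.smul (hg.contDiff.comp hE), hsupp, fun j hj x => ?_⟩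
  rw [← norm_iteratedFDeriv_eq_norm_iteratedDeriv]
  by_cases hx : x ∈ t
  · calc ‖iteratedFDeriv ℝ j (fun x => W x • g (E x)) x‖
        ≤ ∑ i ∈ Finset.range (j + 1), j.choose i * ‖iteratedFDeriv ℝ i W x‖ *
            ‖iteratedFDeriv ℝ (j - i) (g ∘ E) x‖ :=
          norm_iteratedFDeriv_smul_le hW (hg.contDiff.comp hE) x (by exact_mod_cast hj)
      _ ≤ ∑ i ∈ Finset.range (j + 1), j.choose i * V * (S * K) := by
          gcongr with i hi
          · exact hV i (by grind) x hx
          · exact hS g K hg (j - i) (by omega) x hx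
      _ = 2 ^ j * (V * (S * K)) := by
          simp_rw [mul_assoc, ← Finset.sum_mul]
          exact_mod_cast congrArg (fun N : ℕ => (N : ℝ) * (V * (S * K))) (Nat.sum_range_choose j)
      _ ≤ 2 ^ n * (V * (S * K)) := by gcongr; norm_num
      _ = 2 ^ n * (V * S) * K := by ring
  · have hzero : iteratedFDeriv ℝ j (fun x => W x • g (E x)) x = 0 := by
      rw [← Function.notMem_support]
      exact fun h => hx (hsupp (support_iteratedFDeriv_subset j h))
    rw [hzero, norm_zero]
    positivity

end IsAmplitude

end Amplitude

section Gaussian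

variable {E : Type*} [NormedAddCommGroup E] [NormedSpace ℂ E] {f : ℝ → E}

theorem abs_pow_mul_norm_fourier_le {n : ℕ} (hf : ContDiff ℝ n f)
    (hint : ∀ j ≤ n, Integrable (iteratedDeriv j f)) (ξ : ℝ) :
    |ξ| ^ n * ‖𝓕 f ξ‖ ≤ ∫ x, ‖iteratedDeriv n f x‖ := by
  have hfourier := congrFun (Real.fourier_iteratedDeriv (N := (n : ℕ∞)) (n := n) hf
    (fun j hj => hint j (by exact_mod_cast hj)) le_rfl) ξ
  have hnorm : ‖(2 * π * I * ξ : ℂ)‖ = 2 * π * |ξ| := by simp [abs_of_pos Real.pi_pos]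
  calc |ξ| ^ n * ‖𝓕 f ξ‖ ≤ (2 * π * |ξ|) ^ n * ‖𝓕 f ξ‖ := by
        gcongr
        exact le_mul_of_one_le_left (abs_nonneg ξ) (by linarith [Real.pi_gt_three])
    _ = ‖𝓕 (iteratedDeriv n f) ξ‖ := by rw [hfourier, norm_smul, norm_pow, hnorm]
    _ ≤ ∫ x, ‖iteratedDeriv n f x‖ :=
        VectorFourier.norm_fourierIntegral_le_integral_norm _ _ _ _ _

theorem abs_pow_mul_norm_fourier_le_mul_inv {k : ℕ} (hf : ContDiff ℝ (k + 2 : ℕ) f)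
    (hint : ∀ j ≤ k + 2, Integrable (iteratedDeriv j f)) (ξ : ℝ) :
    |ξ| ^ k * ‖𝓕 f ξ‖ ≤
      ((∫ x, ‖iteratedDeriv k f x‖) + ∫ x, ‖iteratedDeriv (k + 2) f x‖) * (1 + ξ ^ 2)⁻¹ := by
  have hk := abs_pow_mul_norm_fourier_le (n := k) (hf.of_le (by exact_mod_cast k.le_add_right 2))
    (fun j hj => hint j (hj.trans (k.le_add_right 2))) ξ
  have hk2 := abs_pow_mul_norm_fourier_le hf hint ξ
  rw [← div_eq_mul_inv, le_div_iff₀ (by positivity)]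
  calc |ξ| ^ k * ‖𝓕 f ξ‖ * (1 + ξ ^ 2) = |ξ| ^ k * ‖𝓕 f ξ‖ + |ξ| ^ (k + 2) * ‖𝓕 f ξ‖ := by
        rw [← sq_abs ξ]
        ring
    _ ≤ _ := add_le_add hk hk2

theorem integrable_fourier_of_contDiff (hf : ContDiff ℝ 2 f)
    (hint : ∀ j ≤ 2, Integrable (iteratedDeriv j f)) : Integrable (𝓕 f) := by
  have hf_int : Integrable f := by simpa using hint 0 zero_le_two
  have hcont : Continuous (𝓕 f) := VectorFourier.fourierIntegral_continuous (L := innerₗ ℝ)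
    Real.continuous_fourierChar continuous_inner hf_int
  refine (integrable_inv_one_add_sq.const_mul
    ((∫ x, ‖f x‖) + ∫ x, ‖iteratedDeriv 2 f x‖)).mono' hcont.aestronglyMeasurable
    (ae_of_all _ fun ξ => ?_)
  simpa using abs_pow_mul_norm_fourier_le_mul_inv (k := 0) hf hint ξ

theorem norm_cexp_sub_one_le {z : ℂ} (hz : z.re ≤ 0) : ‖cexp z - 1‖ ≤ ‖z‖ := by
  simpa using (convex_halfSpace_re_le (0 : ℝ)).norm_image_sub_le_of_norm_deriv_le (𝕜 := ℂ)
    (f := cexp) (C := 1) (x := 0) (y := z) (fun _ _ => Complex.differentiableAt_exp)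
    (fun w hw => by
      rw [Complex.deriv_exp, Complex.norm_exp]
      exact Real.exp_le_one_iff.2 hw) (by simp) hz

theorem re_neg_pi_mul_mul_sq_nonpos {b : ℂ} (hb : 0 ≤ b.re) (x : ℝ) :
    (-π * b * x ^ 2 : ℂ).re ≤ 0 := by
  have hreal : (-π * b * x ^ 2 : ℂ) = ((-(π * x ^ 2) : ℝ) : ℂ) * b := by
    push_cast
    ring
  rw [hreal, Complex.re_ofReal_mul]
  exact mul_nonpos_of_nonpos_of_nonneg (neg_nonpos.2 (by positivity)) hb

theorem inv_re_nonneg {b : ℂ} (hb : 0 ≤ b.re) : 0 ≤ b⁻¹.re := by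
  rw [Complex.inv_re]
  exact div_nonneg hb (normSq_nonneg b)

theorem norm_cexp_neg_pi_mul_mul_sq_le_one {b : ℂ} (hb : 0 ≤ b.re) (x : ℝ) :
    ‖cexp (-π * b * x ^ 2)‖ ≤ 1 := by
  rw [Complex.norm_exp]
  exact Real.exp_le_one_iff.2 (re_neg_pi_mul_mul_sq_nonpos hb x)

theorem norm_cexp_neg_pi_div_mul_sq_sub_one_le {b : ℂ} (hb : 0 ≤ b.re) (ξ : ℝ) :
    ‖cexp (-π / b * ξ ^ 2) - 1‖ ≤ π / ‖b‖ * ξ ^ 2 := by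
  refine (norm_cexp_sub_one_le (div_eq_mul_inv (-π : ℂ) b ▸
    re_neg_pi_mul_mul_sq_nonpos (inv_re_nonneg hb) ξ)).trans_eq ?_
  simp [abs_of_pos Real.pi_pos]

theorem norm_one_div_cpow_half_mul_inv_norm {b : ℂ} (hb : b ≠ 0) :
    ‖1 / b ^ (1 / 2 : ℂ)‖ * ‖b‖⁻¹ = ‖b‖ ^ (-(3 : ℝ) / 2) := by
  have hhalf : (1 / 2 : ℂ) = ((1 / 2 : ℝ) : ℂ) := by push_cast; rfl
  rw [hhalf, norm_div, norm_one, one_div, Complex.norm_cpow_real, ← Real.rpow_neg (norm_nonneg b),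
    ← Real.rpow_neg_one, ← Real.rpow_add (norm_pos_iff.2 hb)]
  norm_num

theorem tendsto_add_ofReal_nhdsGT_zero (b : ℂ) :
    Tendsto (fun ε : ℝ => b + ε) (𝓝[>] 0) (𝓝 b) := by
  have hcont : Continuous fun ε : ℝ => b + ε := by fun_prop
  simpa using (hcont.tendsto 0).mono_left nhdsWithin_le_nhds

theorem tendsto_integral_gaussian_smul (hf : Integrable f) {b : ℂ} (hb : 0 ≤ b.re) :
    Tendsto (fun ε : ℝ => ∫ x : ℝ, cexp (-π * (b + ε) * x ^ 2) • f x) (𝓝[>] 0)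
      (𝓝 (∫ x : ℝ, cexp (-π * b * x ^ 2) • f x)) := by
  refine tendsto_integral_filter_of_dominated_convergence (fun x => ‖f x‖)
    (Eventually.of_forall fun ε => ?_) ?_ hf.norm (ae_of_all _ fun x => ?_)
  · have hcont : Continuous fun x : ℝ => cexp (-π * (b + ε) * x ^ 2) := by fun_prop
    exact hcont.aestronglyMeasurable.smul hf.aestronglyMeasurable
  · filter_upwards [self_mem_nhdsWithin] with ε (hε : 0 < ε)
    refine ae_of_all _ fun x => ?_
    rw [norm_smul]
    exact mul_le_of_le_one_left (norm_nonneg _) (norm_cexp_neg_pi_mul_mul_sq_le_one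
      (by simpa using add_nonneg hb hε.le) x)
  · have hcont : Continuous fun z : ℂ => cexp (-π * z * x ^ 2) • f x := by fun_prop
    exact (hcont.tendsto b).comp (tendsto_add_ofReal_nhdsGT_zero b)

variable [CompleteSpace E]

theorem fourier_fourier_eq_comp_neg (hf : Continuous f) (hf_int : Integrable f)
    (hf' : Integrable (𝓕 f)) (x : ℝ) : 𝓕 (𝓕 f) x = f (-x) := by
  rw [← congrFun (hf.fourierInv_fourier_eq hf_int hf') (-x), Real.fourierInv_eq_fourier_neg,
    neg_neg]

theorem integral_fourier_eq_apply_zero (hf : Continuous f) (hf_int : Integrable f)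
    (hf' : Integrable (𝓕 f)) : ∫ ξ, 𝓕 f ξ = f 0 := by
  rw [← neg_zero, ← fourier_fourier_eq_comp_neg hf hf_int hf', Real.fourier_real_eq]
  simp

theorem integral_cexp_neg_mul_sq_smul (hf : Continuous f) (hf_int : Integrable f)
    (hf' : Integrable (𝓕 f)) {b : ℂ} (hb : 0 < b.re) :
    ∫ x : ℝ, cexp (-π * b * x ^ 2) • f x =
      (1 / b ^ (1 / 2 : ℂ)) • ∫ ξ : ℝ, cexp (-π / b * ξ ^ 2) • 𝓕 f ξ := by
  have hgauss : Integrable fun x : ℝ => cexp (-π * b * x ^ 2) := by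
    have := integrable_cexp_neg_mul_sq (b := π * b) (by
      rw [Complex.re_ofReal_mul]
      exact mul_pos Real.pi_pos hb)
    simpa only [neg_mul] using this
  calc ∫ x : ℝ, cexp (-π * b * x ^ 2) • f x = ∫ x : ℝ, cexp (-π * b * x ^ 2) • 𝓕 (𝓕 f) x := by
        rw [← integral_neg_eq_self]
        simp [fourier_fourier_eq_comp_neg hf hf_int hf']
    _ = ∫ ξ : ℝ, 𝓕 (fun x : ℝ => cexp (-π * b * x ^ 2)) ξ • 𝓕 f ξ := by
        simpa using! (VectorFourier.integral_fourierIntegral_smul_eq_flip (L := innerₗ ℝ)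
          Real.continuous_fourierChar continuous_inner hgauss hf').symm
    _ = _ := by
        rw [fourier_gaussian_pi hb, ← integral_smul]
        simp only [mul_smul]

theorem norm_integral_gaussian_smul_sub_le_of_re_pos (hf : ContDiff ℝ 4 f)
    (hint : ∀ j ≤ 4, Integrable (iteratedDeriv j f)) {b : ℂ} (hb : 0 < b.re) :
    ‖(∫ x : ℝ, cexp (-π * b * x ^ 2) • f x) - (1 / b ^ (1 / 2 : ℂ)) • f 0‖ ≤
      ‖1 / b ^ (1 / 2 : ℂ)‖ * (π / ‖b‖ *
        (((∫ x, ‖iteratedDeriv 2 f x‖) + ∫ x, ‖iteratedDeriv 4 f x‖) * π)) := by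
  have hf_int : Integrable f := by simpa using hint 0 (Nat.zero_le 4)
  have hf' : Integrable (𝓕 f) := integrable_fourier_of_contDiff (hf.of_le (by norm_num))
    fun j hj => hint j (by omega)
  have hmul_int : Integrable fun ξ : ℝ => cexp (-π / b * ξ ^ 2) • 𝓕 f ξ := by
    refine hf'.bdd_smul 1 (Continuous.aestronglyMeasurable (by fun_prop))
      (ae_of_all _ fun ξ => ?_)
    rw [div_eq_mul_inv]
    exact norm_cexp_neg_pi_mul_mul_sq_le_one (inv_re_nonneg hb.le) ξ
  rw [integral_cexp_neg_mul_sq_smul hf.continuous hf_int hf' hb,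
    ← integral_fourier_eq_apply_zero hf.continuous hf_int hf', ← smul_sub,
    ← integral_sub hmul_int hf', norm_smul]
  gcongr
  set A := (∫ x, ‖iteratedDeriv 2 f x‖) + ∫ x, ‖iteratedDeriv 4 f x‖
  calc ‖∫ ξ : ℝ, cexp (-π / b * ξ ^ 2) • 𝓕 f ξ - 𝓕 f ξ‖
      ≤ ∫ ξ : ℝ, π / ‖b‖ * (A * (1 + ξ ^ 2)⁻¹) := by
        refine norm_integral_le_of_norm_le
          ((integrable_inv_one_add_sq.const_mul _).const_mul _) (ae_of_all _ fun ξ => ?_)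
        rw [show cexp (-π / b * ξ ^ 2) • 𝓕 f ξ - 𝓕 f ξ = (cexp (-π / b * ξ ^ 2) - 1) • 𝓕 f ξ by
          rw [sub_smul, one_smul], norm_smul]
        calc ‖cexp (-π / b * ξ ^ 2) - 1‖ * ‖𝓕 f ξ‖ ≤ π / ‖b‖ * ξ ^ 2 * ‖𝓕 f ξ‖ := by
              gcongr
              exact norm_cexp_neg_pi_div_mul_sq_sub_one_le hb.le ξ
          _ = π / ‖b‖ * (|ξ| ^ 2 * ‖𝓕 f ξ‖) := by rw [sq_abs, mul_assoc]
          _ ≤ π / ‖b‖ * (A * (1 + ξ ^ 2)⁻¹) := by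
              exact mul_le_mul_of_nonneg_left
                (abs_pow_mul_norm_fourier_le_mul_inv (k := 2) hf hint ξ) (by positivity)
    _ = π / ‖b‖ * (A * π) := by
        rw [integral_const_mul, integral_const_mul, integral_univ_inv_one_add_sq]

theorem norm_integral_gaussian_smul_sub_le (hf : ContDiff ℝ 4 f)
    (hint : ∀ j ≤ 4, Integrable (iteratedDeriv j f)) {b : ℂ} (hb : 0 ≤ b.re) (hb0 : b ≠ 0) :
    ‖(∫ x : ℝ, cexp (-π * b * x ^ 2) • f x) - (1 / b ^ (1 / 2 : ℂ)) • f 0‖ ≤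
      π ^ 2 * ((∫ x, ‖iteratedDeriv 2 f x‖) + ∫ x, ‖iteratedDeriv 4 f x‖) *
        ‖b‖ ^ (-(3 : ℝ) / 2) := by
  set A := (∫ x, ‖iteratedDeriv 2 f x‖) + ∫ x, ‖iteratedDeriv 4 f x‖
  have hslit : b ∈ slitPlane := by
    rw [Complex.mem_slitPlane_iff]
    exact hb.lt_or_eq.imp_right fun h him => hb0 (Complex.ext h.symm him)
  have hf_int : Integrable f := by simpa using hint 0 (Nat.zero_le 4)
  have hlim := tendsto_add_ofReal_nhdsGT_zero b
  have hroot : Tendsto (fun ε : ℝ => 1 / (b + ε) ^ (1 / 2 : ℂ)) (𝓝[>] 0)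
      (𝓝 (1 / b ^ (1 / 2 : ℂ))) :=
    tendsto_const_nhds.div ((continuousAt_cpow_const hslit).tendsto.comp hlim)
      (by simp [Complex.cpow_eq_zero_iff, hb0])
  have hle := le_of_tendsto_of_tendsto
    ((tendsto_integral_gaussian_smul hf_int hb).sub (hroot.smul_const (f 0))).norm
    (hroot.norm.mul ((tendsto_const_nhds.div hlim.norm (by simpa using hb0)).mul_const (A * π)))
    (by
      filter_upwards [self_mem_nhdsWithin] with ε (hε : 0 < ε)
      exact norm_integral_gaussian_smul_sub_le_of_re_pos hf hint
        (by simpa using add_pos_of_nonneg_of_pos hb hε))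
  refine hle.trans_eq ?_
  rw [← norm_one_div_cpow_half_mul_inv_norm hb0]
  ring

end Gaussian

section StationaryPhase

variable {E : Type*} [NormedAddCommGroup E] [NormedSpace ℂ E] {f T : ℝ → ℝ}

namespace IsMorseCoordinate

theorem isCompact_preimage (hT : IsMorseCoordinate f T) {s : Set ℝ} (hs : IsCompact s) :
    IsCompact (T ⁻¹' s) :=
  (hT.strictMono.orderIsoOfSurjective T hT.surjective).toHomeomorph.isCompact_preimage.2 hs

theorem integral_comp_smul_deriv (hT : IsMorseCoordinate f T) (G : ℝ → E) :
    ∫ u, deriv T u • G (T u) = ∫ t, G t := by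
  have hcov := integral_image_eq_integral_abs_deriv_smul MeasurableSet.univ
    (fun u _ => ((hT.contDiff.differentiable (by simp)) u).hasDerivAt.hasDerivWithinAt)
    hT.strictMono.injective.injOn G
  simpa [image_univ, hT.surjective.range_eq, abs_of_nonneg hT.strictMono.monotone.deriv_nonneg]
    using hcov.symm

theorem integral_cexp_smul_eq (hT : IsMorseCoordinate f T) (g : ℝ → E) (y : ℝ) :
    ∫ t, cexp (-(I * y * f t)) • g t =
      ∫ u : ℝ, cexp (-π * (I * y / (2 * π)) * u ^ 2) • (deriv T u • g (T u)) := by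
  rw [← hT.integral_comp_smul_deriv]
  refine integral_congr_ae (ae_of_all _ fun u => ?_)
  have hphase : (-(I * y * f (T u)) : ℂ) = -π * (I * y / (2 * π)) * u ^ 2 := by
    rw [hT.apply_eq]
    push_cast
    field_simp
  simp only [hphase]
  rw [smul_comm]

theorem exists_norm_integral_cexp_smul_sub_le [CompleteSpace E] (hT : IsMorseCoordinate f T)
    {s : Set ℝ} (hs : IsCompact s) :
    ∃ C, 0 ≤ C ∧ ∀ (g : ℝ → E) (K : ℝ), IsAmplitude 4 s K g → ∀ y : ℝ, y ≠ 0 →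
      ‖(∫ t, cexp (-(I * y * f t)) • g t) -
          (1 / (I * y / (2 * π)) ^ (1 / 2 : ℂ)) • (deriv T 0 • g 0)‖ ≤
        C * K * |y| ^ (-(3 : ℝ) / 2) := by
  have ht := hT.isCompact_preimage hs
  obtain ⟨M, hM, hg_comp⟩ := IsAmplitude.exists_smul_comp (F := E)
    (contDiff_infty.1 hT.contDiff 4) (contDiff_infty.1 (contDiff_infty_iff_deriv.1 hT.contDiff).2 4)
    ht Subset.rfl
  set V := volume.real (T ⁻¹' s)
  refine ⟨π ^ 2 * (M * V + M * V) * (2 * π) ^ ((3 : ℝ) / 2), by positivity,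
    fun g K hg y hy => ?_⟩
  have hh := hg_comp g K hg
  have hnorm : ‖(I * y / (2 * π) : ℂ)‖ = |y| / (2 * π) := by
    simp [abs_of_pos Real.pi_pos]
  have hgauss := norm_integral_gaussian_smul_sub_le hh.contDiff
    (fun j hj => hh.integrable_iteratedDeriv ht hj) (b := I * y / (2 * π))
    (by simp [Complex.div_re]) (by simp [hy, Real.pi_ne_zero])
  rw [hT.map_zero, ← hT.integral_cexp_smul_eq, hnorm] at hgauss
  refine hgauss.trans ?_
  calc _ ≤ π ^ 2 * (M * K * V + M * K * V) * (|y| / (2 * π)) ^ (-(3 : ℝ) / 2) := by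
        gcongr
        · exact hh.integral_norm_iteratedDeriv_le ht (by norm_num)
        · exact hh.integral_norm_iteratedDeriv_le ht le_rfl
    _ = _ := by
        rw [Real.div_rpow (abs_nonneg y) (by positivity), neg_div,
          Real.rpow_neg (by positivity : 0 ≤ 2 * π), div_inv_eq_mul]
        ring

end IsMorseCoordinate

end StationaryPhase

section NonstationaryPhase

variable {E : Type*} [NormedAddCommGroup E]

/-- Up to a factor `I`, the transpose of `(I * φ')⁻¹ * d/dt`, an operator which fixes
`exp (I * φ)`. It carries out one integration by parts against a phase `φ` with `φ' ≠ 0` on the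
support of `g`. -/
noncomputable def phaseTranspose [NormedSpace ℝ E] (φ : ℝ → ℝ) (g : ℝ → E) : ℝ → E :=
  deriv fun t => (deriv φ t)⁻¹ • g t

section Real

variable [NormedSpace ℝ E] {φ f : ℝ → ℝ} {g : ℝ → E}

theorem contDiff_inv_smul {n : ℕ} (hf : ContDiff ℝ n f) (hg : ContDiff ℝ n g)
    (hne : ∀ t ∈ tsupport g, f t ≠ 0) : ContDiff ℝ n fun t => (f t)⁻¹ • g t := by
  refine contDiff_iff_contDiffAt.2 fun t => ?_
  by_cases ht : t ∈ tsupport g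
  · exact (hf.contDiffAt.inv (hne t ht)).smul hg.contDiffAt
  · refine (contDiffAt_const (c := (0 : E))).congr_of_eventuallyEq ?_
    filter_upwards [notMem_tsupport_iff_eventuallyEq.1 ht] with x hx
    simp [hx]

theorem hasDerivAt_inv_smul {f' : ℝ} {g' : E} {t : ℝ} (hf : HasDerivAt f f' t)
    (hg : HasDerivAt g g' t) (hne : f t ≠ 0) :
    HasDerivAt (fun t => (f t)⁻¹ • g t) ((f t)⁻¹ • (g' - (f' / f t) • g t)) t := by
  refine ((hf.inv hne).smul hg).congr_deriv ?_
  module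

theorem contDiff_phaseTranspose {n : ℕ} (hφ : ContDiff ℝ (n + 2 : ℕ) φ)
    (hg : ContDiff ℝ (n + 1 : ℕ) g) (hne : ∀ t ∈ tsupport g, deriv φ t ≠ 0) :
    ContDiff ℝ n (phaseTranspose φ g) := by
  have hφ' : ContDiff ℝ (n + 1 : ℕ) (deriv φ) :=
    (contDiff_succ_iff_deriv (n := (n + 1 : ℕ)).1 (by exact_mod_cast hφ)).2.2
  exact (contDiff_succ_iff_deriv.1 (by exact_mod_cast contDiff_inv_smul hφ' hg hne)).2.2

theorem tsupport_phaseTranspose_subset : tsupport (phaseTranspose φ g) ⊆ tsupport g :=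
  tsupport_deriv_subset.trans (tsupport_smul_subset_right _ g)

theorem phaseTranspose_apply (hφ : ContDiff ℝ 2 φ) (hg : ContDiff ℝ 1 g) {t : ℝ}
    (ht : deriv φ t ≠ 0) :
    phaseTranspose φ g t =
      (deriv φ t)⁻¹ • (deriv g t - (iteratedDeriv 2 φ t / deriv φ t) • g t) := by
  rw [iteratedDeriv_succ, iteratedDeriv_one]
  have hφ' : ContDiff ℝ 1 (deriv φ) := (contDiff_succ_iff_deriv (n := 1).1 hφ).2.2
  exact (hasDerivAt_inv_smul (hφ'.differentiable one_ne_zero t).hasDerivAt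
    (hg.differentiable one_ne_zero t).hasDerivAt ht).deriv

theorem phaseTranspose_phaseTranspose_apply (hφ : ContDiff ℝ 3 φ) (hg : ContDiff ℝ 2 g) {t : ℝ}
    (ht : deriv φ t ≠ 0) :
    phaseTranspose φ (phaseTranspose φ g) t =
      (deriv φ t ^ 2)⁻¹ • (iteratedDeriv 2 g t -
        (3 * (iteratedDeriv 2 φ t / deriv φ t)) • iteratedDeriv 1 g t +
        (3 * (iteratedDeriv 2 φ t / deriv φ t) ^ 2 - iteratedDeriv 3 φ t / deriv φ t) •
          iteratedDeriv 0 g t) := by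
  have hφ' : ContDiff ℝ 2 (deriv φ) := (contDiff_succ_iff_deriv (n := 2).1 hφ).2.2
  have hφ'' : ContDiff ℝ 1 (iteratedDeriv 2 φ) := by
    rw [iteratedDeriv_succ, iteratedDeriv_one]
    exact (contDiff_succ_iff_deriv (n := 1).1 hφ').2.2
  have hg' : ContDiff ℝ 1 (deriv g) := (contDiff_succ_iff_deriv (n := 1).1 hg).2.2
  have hf : HasDerivAt (deriv φ) (iteratedDeriv 2 φ t) t := by
    rw [iteratedDeriv_succ, iteratedDeriv_one]
    exact (hφ'.differentiable two_ne_zero t).hasDerivAt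
  have hf' : HasDerivAt (iteratedDeriv 2 φ) (iteratedDeriv 3 φ t) t := by
    rw [iteratedDeriv_succ (n := 2)]
    exact (hφ''.differentiable one_ne_zero t).hasDerivAt
  have hgd : HasDerivAt g (deriv g t) t := (hg.differentiable two_ne_zero t).hasDerivAt
  have hgd' : HasDerivAt (deriv g) (iteratedDeriv 2 g t) t := by
    rw [iteratedDeriv_succ, iteratedDeriv_one]
    exact (hg'.differentiable one_ne_zero t).hasDerivAt
  have hinner : HasDerivAt (phaseTranspose φ g) _ t :=
    (hasDerivAt_inv_smul hf
      (hgd'.fun_sub ((hf'.fun_div hf ht).fun_smul hgd)) ht).congr_of_eventuallyEq <| by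
        filter_upwards [hφ'.continuous.continuousAt.eventually_ne ht] with x hx
        exact phaseTranspose_apply (hφ.of_le (by norm_num)) (hg.of_le (by norm_num)) hx
  have houter : phaseTranspose φ (phaseTranspose φ g) t = _ :=
    (hasDerivAt_inv_smul hf hinner ht).deriv
  rw [houter, phaseTranspose_apply (hφ.of_le (by norm_num)) (hg.of_le (by norm_num)) ht,
    iteratedDeriv_one, iteratedDeriv_zero]
  match_scalars <;> field_simp <;> ring

theorem norm_phaseTranspose_phaseTranspose_le {s : Set ℝ} {K δ ρ t : ℝ} (hφ : ContDiff ℝ 3 φ)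
    (hg : IsAmplitude 2 s K g) (hδ : 0 < δ) (h1 : δ ≤ |deriv φ t|)
    (h2 : |iteratedDeriv 2 φ t| ≤ ρ * |deriv φ t|)
    (h3 : |iteratedDeriv 3 φ t| ≤ ρ * |deriv φ t|) :
    ‖phaseTranspose φ (phaseTranspose φ g) t‖ ≤ K * (1 + 4 * ρ + 3 * ρ ^ 2) / δ ^ 2 := by
  have hpos : 0 < |deriv φ t| := hδ.trans_le h1
  have hκ : |iteratedDeriv 2 φ t / deriv φ t| ≤ ρ := by rwa [abs_div, div_le_iff₀ hpos]
  have hl : |iteratedDeriv 3 φ t / deriv φ t| ≤ ρ := by rwa [abs_div, div_le_iff₀ hpos]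
  have hρ : 0 ≤ ρ := (abs_nonneg _).trans hκ
  have hκ' : |3 * (iteratedDeriv 2 φ t / deriv φ t)| ≤ 3 * ρ := by
    rw [abs_mul, abs_of_pos (zero_lt_three' ℝ)]
    gcongr
  have hκl : |3 * (iteratedDeriv 2 φ t / deriv φ t) ^ 2 - iteratedDeriv 3 φ t / deriv φ t| ≤
      3 * ρ ^ 2 + ρ := by
    refine (abs_sub _ _).trans (add_le_add ?_ hl)
    rw [abs_mul, abs_of_pos (zero_lt_three' ℝ), abs_pow]
    gcongr
  have hK := hg.bound_nonneg
  rw [phaseTranspose_phaseTranspose_apply hφ hg.contDiff (abs_pos.1 hpos), norm_smul, norm_inv,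
    norm_pow, Real.norm_eq_abs, inv_mul_eq_div]
  gcongr
  have hg1 := (norm_smul_le (_ : ℝ) _).trans
    (mul_le_mul hκ' (hg.norm_iteratedDeriv_le 1 one_le_two t) (norm_nonneg _) (by positivity))
  have hg0 := (norm_smul_le (_ : ℝ) _).trans
    (mul_le_mul hκl (hg.norm_iteratedDeriv_le 0 zero_le_two t) (norm_nonneg _) (by positivity))
  refine (norm_add_le_of_le
    (norm_sub_le_of_le (hg.norm_iteratedDeriv_le 2 le_rfl t) hg1) hg0).trans_eq ?_
  ring

end Real

variable [NormedSpace ℂ E] {φ : ℝ → ℝ} {g : ℝ → E}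

theorem integral_cexp_smul_eq_phaseTranspose (hφ : ContDiff ℝ 2 φ) (hg : ContDiff ℝ 1 g)
    (hg_supp : HasCompactSupport g) (hne : ∀ t ∈ tsupport g, deriv φ t ≠ 0) :
    ∫ t, cexp (I * φ t) • g t = I • ∫ t, cexp (I * φ t) • phaseTranspose φ g t := by
  have hφ' : ContDiff ℝ 1 (deriv φ) := (contDiff_succ_iff_deriv (n := 1).1 hφ).2.2
  set v : ℝ → E := fun t => (deriv φ t)⁻¹ • g t with hv_def
  have hv : ContDiff ℝ 1 v := contDiff_inv_smul hφ' hg hne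
  have hv_supp : HasCompactSupport v := hg_supp.smul_left
  have hv' : Continuous (deriv v) := hv.continuous_deriv le_rfl
  have hderiv : ∀ t, HasDerivAt (fun t => cexp (I * φ t))
      (cexp (I * φ t) * (I * ((deriv φ t : ℝ) : ℂ))) t := fun t =>
    (((hφ.differentiable two_ne_zero t).hasDerivAt.ofReal_comp).const_mul I).cexp
  have hcont : Continuous fun t => cexp (I * φ t) := by
    have := hφ.continuous
    fun_prop
  have hcont' : Continuous fun t => cexp (I * φ t) * (I * ((deriv φ t : ℝ) : ℂ)) :=
    hcont.mul (by have := hφ'.continuous; fun_prop)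
  have hibp := integral_bilinear_hasDerivAt_right_eq_neg_left_of_integrable
    (L := ContinuousLinearMap.lsmul ℝ ℂ) (v := v) (fun t _ => hderiv t)
    (fun t _ => (hv.differentiable one_ne_zero t).hasDerivAt)
    ((hcont.smul hv').integrable_of_hasCompactSupport hv_supp.deriv.smul_left)
    ((hcont'.smul hv.continuous).integrable_of_hasCompactSupport hv_supp.smul_left)
    ((hcont.smul hv.continuous).integrable_of_hasCompactSupport hv_supp.smul_left)
  have hcancel : ∀ t, (cexp (I * φ t) * (I * ((deriv φ t : ℝ) : ℂ))) • v t =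
      I • cexp (I * φ t) • g t := fun t => by
    by_cases ht : t ∈ tsupport g
    · have hne' : ((deriv φ t : ℝ) : ℂ) ≠ 0 := by exact_mod_cast hne t ht
      simp only [hv_def, ← Complex.coe_smul, smul_smul, Complex.ofReal_inv]
      congr 1
      field_simp
    · simp [hv_def, image_eq_zero_of_notMem_tsupport ht]
  simp only [ContinuousLinearMap.lsmul_apply, hcancel, integral_smul] at hibp
  rw [phaseTranspose, hibp, smul_neg, smul_smul, I_mul_I, neg_one_smul, neg_neg]

theorem IsAmplitude.norm_integral_cexp_smul_le {n : ℕ} {s : Set ℝ} {K : ℝ}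
    (hg : IsAmplitude n s K g) (hs : IsCompact s) (φ : ℝ → ℝ) :
    ‖∫ t, cexp (I * φ t) • g t‖ ≤ K * volume.real s := by
  refine (norm_integral_le_integral_norm _).trans ?_
  simpa [norm_smul, mul_comm I, Complex.norm_exp_ofReal_mul_I]
    using hg.integral_norm_iteratedDeriv_le hs n.zero_le

theorem norm_integral_cexp_smul_le_of_deriv_ne_zero {s : Set ℝ} {K δ ρ : ℝ} (hs : IsCompact s)
    (hφ : ContDiff ℝ 3 φ) (hg : IsAmplitude 2 s K g) (hδ : 0 < δ)
    (h1 : ∀ t ∈ s, δ ≤ |deriv φ t|) (h2 : ∀ t ∈ s, |iteratedDeriv 2 φ t| ≤ ρ * |deriv φ t|)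
    (h3 : ∀ t ∈ s, |iteratedDeriv 3 φ t| ≤ ρ * |deriv φ t|) :
    ‖∫ t, cexp (I * φ t) • g t‖ ≤ K * (1 + 4 * ρ + 3 * ρ ^ 2) / δ ^ 2 * volume.real s := by
  have hne : ∀ t ∈ tsupport g, deriv φ t ≠ 0 := fun t ht =>
    abs_pos.1 (hδ.trans_le (h1 t (hg.tsupport_subset ht)))
  have hsub : tsupport (phaseTranspose φ g) ⊆ tsupport g := tsupport_phaseTranspose_subset
  have hg_supp := hg.hasCompactSupport hs
  rw [integral_cexp_smul_eq_phaseTranspose (hφ.of_le (by norm_num))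
      (hg.contDiff.of_le (by norm_num)) hg_supp hne,
    integral_cexp_smul_eq_phaseTranspose (hφ.of_le (by norm_num))
      (contDiff_phaseTranspose hφ hg.contDiff hne)
      (hg_supp.of_isClosed_subset (isClosed_tsupport _) hsub) (fun t ht => hne t (hsub ht)),
    norm_smul, norm_smul, norm_I, one_mul, one_mul,
    ← setIntegral_eq_integral_of_forall_compl_eq_zero (s := s) fun t ht => by
      rw [image_eq_zero_of_notMem_tsupport fun h => ht (hg.tsupport_subset (hsub
        (tsupport_phaseTranspose_subset h))), smul_zero]]
  refine norm_setIntegral_le_of_norm_le_const hs.measure_lt_top fun t ht => ?_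
  rw [norm_smul, mul_comm I, Complex.norm_exp_ofReal_mul_I, one_mul]
  exact norm_phaseTranspose_phaseTranspose_le hφ hg hδ (h1 t ht) (h2 t ht) (h3 t ht)

end NonstationaryPhase

section FourierMellin

/-- The phase of the integrand of `U†(r, σ + iβ)` after the substitution `x = exp t`. -/
noncomputable def mellinPhase (r β t : ℝ) : ℝ :=
  β * t - 2 * π * r * Real.exp t

/-- The amplitude of the integrand of `U†(r, σ + iβ)` after the substitution `x = exp t`. In the
notation of the theorem it is `U₀(σ, exp t)`. -/
noncomputable def mellinAmplitude (σ : ℝ) (U : ℝ → ℝ) (t : ℝ) : ℂ :=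
  ((Real.exp (σ * t) • U (Real.exp t) : ℝ) : ℂ)

variable {a b r β : ℝ}

theorem contDiff_mellinPhase {n : WithTop ℕ∞} : ContDiff ℝ n (mellinPhase r β) :=
  (contDiff_const.mul contDiff_id).sub (contDiff_const.mul Real.contDiff_exp)

theorem deriv_mellinPhase :
    deriv (mellinPhase r β) = fun t => β - 2 * π * r * Real.exp t := by
  ext t
  have h : HasDerivAt (mellinPhase r β) (β * 1 - 2 * π * r * Real.exp t) t :=
    ((hasDerivAt_id t).const_mul β).sub ((Real.hasDerivAt_exp t).const_mul (2 * π * r))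
  rw [h.deriv, mul_one]

theorem iteratedDeriv_add_two_mellinPhase (n : ℕ) (t : ℝ) :
    iteratedDeriv (n + 2) (mellinPhase r β) t = -(2 * π * r * Real.exp t) := by
  have hderiv : deriv (fun t => β - 2 * π * r * Real.exp t) = fun t =>
      -(2 * π * r) * Real.exp t := by
    ext t
    simp
  rw [iteratedDeriv_succ', iteratedDeriv_succ', deriv_mellinPhase, hderiv,
    iteratedDeriv_const_mul_field, iteratedDeriv_eq_iterate, Real.iter_deriv_exp, neg_mul]

theorem mellinPhase_add {τ : ℝ} (hτ : 2 * π * r * Real.exp τ = β) (u : ℝ) :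
    mellinPhase r β (τ + u) = mellinPhase r β τ - β * (Real.exp u - 1 - u) := by
  rw [mellinPhase, mellinPhase, Real.exp_add, ← mul_assoc, hτ]
  ring

theorem Udag_eq_integral_mellinPhase (U : ℝ → ℝ) (r σ β : ℝ) :
    Udag U r (σ + I * β) = ∫ t, cexp (I * mellinPhase r β t) • mellinAmplitude σ U t := by
  have hcov := integral_image_eq_integral_abs_deriv_smul MeasurableSet.univ
    (fun x _ => (Real.hasDerivAt_exp x).hasDerivWithinAt) Real.exp_injective.injOn
    (fun x : ℝ => (U x : ℂ) * e (-(r * x)) * (x : ℂ) ^ ((σ + I * β : ℂ) - 1))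
  rw [image_univ, Real.range_exp, setIntegral_univ] at hcov
  rw [Udag, hcov]
  refine integral_congr_ae (ae_of_all _ fun t => ?_)
  have hpow : (Real.exp t : ℂ) * (Real.exp t : ℂ) ^ ((σ + I * β : ℂ) - 1) =
      cexp (σ * t + I * (β * t)) := by
    have hne : (Real.exp t : ℂ) ≠ 0 := by exact_mod_cast (Real.exp_pos t).ne'
    rw [Complex.cpow_sub _ _ hne, Complex.cpow_one, mul_div_cancel₀ _ hne,
      Complex.cpow_def_of_ne_zero hne, ← Complex.ofReal_log (Real.exp_pos t).le, Real.log_exp]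
    ring_nf
  calc |Real.exp t| • ((U (Real.exp t) : ℂ) * e (-(r * Real.exp t)) *
        (Real.exp t : ℂ) ^ ((σ + I * β : ℂ) - 1))
      = U (Real.exp t) * e (-(r * Real.exp t)) *
        ((Real.exp t : ℂ) * (Real.exp t : ℂ) ^ ((σ + I * β : ℂ) - 1)) := by
        rw [abs_of_pos (Real.exp_pos t), Complex.real_smul]
        ring
    _ = U (Real.exp t) *
        (e (-(r * Real.exp t)) * cexp (I * (β * t))) * cexp (σ * t) := by
        rw [hpow, Complex.exp_add]
        ring
    _ = U (Real.exp t) * cexp (I * mellinPhase r β t) * cexp (σ * t) := by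
        rw [e, ← Complex.exp_add, mellinPhase]
        congr 3
        push_cast
        ring
    _ = cexp (I * mellinPhase r β t) • mellinAmplitude σ U t := by
        rw [mellinAmplitude]
        simp only [smul_eq_mul]
        push_cast
        ring

theorem exists_isAmplitude_mellinAmplitude (n : ℕ) (σ : ℝ) (ha : 0 < a) (b : ℝ) :
    ∃ M, 0 ≤ M ∧ ∀ (U : ℝ → ℝ) (K : ℝ), IsAmplitude n (Icc a b) K U →
      IsAmplitude n (Icc (Real.log a) (Real.log b)) (M * K) (mellinAmplitude σ U) := by
  have hpre : Real.exp ⁻¹' Icc a b ⊆ Icc (Real.log a) (Real.log b) := fun t ht =>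
    ⟨(Real.log_le_iff_le_exp ha).2 ht.1,
      (Real.le_log_iff_exp_le ((Real.exp_pos t).trans_le ht.2)).2 ht.2⟩
  obtain ⟨M, hM, hcomp⟩ := IsAmplitude.exists_smul_comp (F := ℝ) (n := n)
    (W := fun t => Real.exp (σ * t)) Real.contDiff_exp (by fun_prop) isCompact_Icc hpre
  exact ⟨M, hM, fun U K hU => (hcomp U K hU).ofReal⟩

theorem half_le_abs_sub_of_notMem_Icc {x z : ℝ} (ha : 0 < a) (hx : x ∈ Icc a b)
    (hz : z ∉ Icc (a / 2) (2 * b)) : a / 2 ≤ |z - x| ∧ |z| / 2 ≤ |z - x| := by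
  obtain ⟨hax, hxb⟩ := hx
  rcases lt_or_ge z (a / 2) with hza | hza
  · rw [abs_sub_comm, abs_of_pos (by linarith : 0 < x - z)]
    refine ⟨by linarith, ?_⟩
    have habs : |z| ≤ 2 * (x - z) := abs_le.2 ⟨by linarith, by linarith⟩
    linarith
  · have hzb : 2 * b < z := not_le.1 fun h => hz ⟨hza, h⟩
    rw [abs_of_pos (by linarith : 0 < z - x), abs_of_pos (by linarith : 0 < z)]
    constructor <;> linarith

theorem abs_deriv_mellinPhase (hr : r ≠ 0) (β t : ℝ) :
    |deriv (mellinPhase r β) t| = 2 * π * |r| * |β / (2 * π * r) - Real.exp t| := by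
  rw [deriv_mellinPhase, ← abs_of_pos Real.two_pi_pos, ← abs_mul, ← abs_mul,
    abs_of_pos Real.two_pi_pos, mul_sub, mul_div_cancel₀ β (by simp [hr, Real.pi_ne_zero])]

theorem abs_eq_mul_abs_div (hr : r ≠ 0) (β : ℝ) : |β| = 2 * π * |r| * |β / (2 * π * r)| := by
  rw [abs_div, abs_mul, abs_of_pos Real.two_pi_pos,
    mul_div_cancel₀ _ (by simp [hr, Real.pi_ne_zero])]

theorem mul_max_le_abs_deriv_mellinPhase {t : ℝ} (ha : 0 < a) (hr : r ≠ 0)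
    (ht : Real.exp t ∈ Icc a b) (hz : β / (2 * π * r) ∉ Icc (a / 2) (2 * b)) :
    min (1 / 2) (π * a) * max |β| |r| ≤ |deriv (mellinPhase r β) t| := by
  obtain ⟨hza, hzz⟩ := half_le_abs_sub_of_notMem_Icc ha ht hz
  rw [abs_deriv_mellinPhase hr, mul_max_of_nonneg _ _ (by positivity)]
  refine max_le ?_ ?_
  · calc min (1 / 2) (π * a) * |β| ≤ 1 / 2 * |β| := by gcongr; exact min_le_left _ _
      _ = 2 * π * |r| * (|β / (2 * π * r)| / 2) := by linarith [abs_eq_mul_abs_div hr β]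
      _ ≤ 2 * π * |r| * |β / (2 * π * r) - Real.exp t| := by gcongr
  · calc min (1 / 2) (π * a) * |r| ≤ π * a * |r| := by gcongr; exact min_le_right _ _
      _ = 2 * π * |r| * (a / 2) := by ring
      _ ≤ 2 * π * |r| * |β / (2 * π * r) - Real.exp t| := by gcongr

theorem abs_iteratedDeriv_mellinPhase_le {t : ℝ} (n : ℕ) (ha : 0 < a) (hr : r ≠ 0)
    (ht : Real.exp t ∈ Icc a b) (hz : β / (2 * π * r) ∉ Icc (a / 2) (2 * b)) :
    |iteratedDeriv (n + 2) (mellinPhase r β) t| ≤ 2 * b / a * |deriv (mellinPhase r β) t| := by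
  have hb : 0 < b := (Real.exp_pos t).trans_le ht.2
  have hza := (half_le_abs_sub_of_notMem_Icc ha ht hz).1
  calc |iteratedDeriv (n + 2) (mellinPhase r β) t| = 2 * π * |r| * Real.exp t := by
        rw [iteratedDeriv_add_two_mellinPhase, abs_neg, abs_mul, abs_mul,
          abs_of_pos Real.two_pi_pos, Real.abs_exp]
    _ ≤ 2 * π * |r| * b := by gcongr; exact ht.2
    _ = 2 * b / a * (2 * π * |r| * (a / 2)) := by field_simp
    _ ≤ 2 * b / a * |deriv (mellinPhase r β) t| := by
        rw [abs_deriv_mellinPhase hr]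
        gcongr

theorem min_one_inv_sq_le_rpow {m : ℝ} (hm : 0 < m) : min 1 (m ^ 2)⁻¹ ≤ m ^ (-(3 : ℝ) / 2) := by
  rcases le_total 1 m with h1m | hm1
  · refine (min_le_right _ _).trans ?_
    rw [← Real.rpow_natCast, ← Real.rpow_neg hm.le]
    exact Real.rpow_le_rpow_of_exponent_le h1m (by norm_num)
  · exact (min_le_left _ _).trans
      (Real.one_le_rpow_of_pos_of_le_one_of_nonpos hm hm1 (by norm_num))

theorem exists_norm_integral_mellinPhase_le {E : Type*} [NormedAddCommGroup E] [NormedSpace ℂ E]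
    (ha : 0 < a) (hb : 0 < b) :
    ∃ C, ∀ (g : ℝ → E) (K : ℝ), IsAmplitude 2 (Icc (Real.log a) (Real.log b)) K g →
      ∀ r β : ℝ, r ≠ 0 → β / (2 * π * r) ∉ Icc (a / 2) (2 * b) →
        ‖∫ t, cexp (I * mellinPhase r β t) • g t‖ ≤
          C * K * max |β| |r| ^ (-(3 : ℝ) / 2) := by
  set s := Icc (Real.log a) (Real.log b)
  have hexp : ∀ t ∈ s, Real.exp t ∈ Icc a b := fun t ht =>
    ⟨(Real.log_le_iff_le_exp ha).1 ht.1, (Real.le_log_iff_exp_le hb).1 ht.2⟩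
  set ρ := 2 * b / a
  set c := min (1 / 2) (π * a)
  have hc : 0 < c := lt_min one_half_pos (by positivity)
  set A := (1 + 4 * ρ + 3 * ρ ^ 2) / c ^ 2
  refine ⟨volume.real s * max 1 A, fun g K hg r β hr hz => ?_⟩
  have hK := hg.bound_nonneg
  set m := max |β| |r|
  have hm : 0 < m := lt_max_of_lt_right (abs_pos.2 hr)
  have htriv : ‖∫ t, cexp (I * mellinPhase r β t) • g t‖ ≤ K * volume.real s * 1 * 1 := by
    simpa using hg.norm_integral_cexp_smul_le isCompact_Icc (mellinPhase r β)
  have hibp : ‖∫ t, cexp (I * mellinPhase r β t) • g t‖ ≤ K * volume.real s * A * (m ^ 2)⁻¹ := by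
    refine (norm_integral_cexp_smul_le_of_deriv_ne_zero isCompact_Icc contDiff_mellinPhase hg
      (mul_pos hc hm) (fun t ht => mul_max_le_abs_deriv_mellinPhase ha hr (hexp t ht) hz)
      (fun t ht => abs_iteratedDeriv_mellinPhase_le 0 ha hr (hexp t ht) hz)
      (fun t ht => abs_iteratedDeriv_mellinPhase_le 1 ha hr (hexp t ht) hz)).trans_eq ?_
    simp only [A]
    ring
  calc _ ≤ K * volume.real s * max 1 A * min 1 (m ^ 2)⁻¹ := by
        rw [mul_min_of_nonneg _ _ (by positivity)]
        refine le_min (htriv.trans ?_) (hibp.trans ?_) <;> gcongr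
        · exact le_max_left _ _
        · exact le_max_right _ _
    _ ≤ _ := by
        rw [mul_comm (_ * _) K, ← mul_assoc]
        gcongr
        exact min_one_inv_sq_le_rpow hm

theorem exists_isMorseCoordinate_exp_sub_one_sub :
    ∃ T, IsMorseCoordinate (fun t => Real.exp t - 1 - t) T ∧ deriv T 0 = 1 := by
  have hderiv : deriv (fun t => Real.exp t - 1 - t) = fun t => Real.exp t - 1 := by
    ext t
    exact (((Real.hasDerivAt_exp t).sub_const 1).fun_sub (hasDerivAt_id t)).deriv
  have hderiv2 : deriv (deriv fun t => Real.exp t - 1 - t) = Real.exp := by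
    ext t
    simp [hderiv]
  obtain ⟨T, hT⟩ := exists_isMorseCoordinate (f := fun t => Real.exp t - 1 - t)
    (fun t => by fun_prop) (by simp) (by simp)
    (fun t => by rw [hderiv2]; exact Real.exp_pos t)
  have hsq := hT.deriv_deriv_mul_sq (by fun_prop) (by simp)
  rw [hderiv2, Real.exp_zero, one_mul] at hsq
  exact ⟨T, hT, (pow_eq_one_iff_of_nonneg
    hT.strictMono.monotone.deriv_nonneg two_ne_zero).1 hsq⟩

theorem integral_cexp_mellinPhase_smul_eq {E : Type*} [NormedAddCommGroup E] [NormedSpace ℂ E]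
    {τ : ℝ} (hτ : 2 * π * r * Real.exp τ = β) (g : ℝ → E) :
    ∫ t, cexp (I * mellinPhase r β t) • g t = cexp (I * mellinPhase r β τ) •
      ∫ u, cexp (-(I * β * ((Real.exp u - 1 - u : ℝ) : ℂ))) • g (τ + u) := by
  rw [← integral_add_left_eq_self _ τ, ← integral_smul]
  refine integral_congr_ae (ae_of_all _ fun u => ?_)
  simp only [mellinPhase_add hτ, smul_smul, ← Complex.exp_add]
  congr 2
  push_cast
  ring

theorem exists_norm_integral_mellinPhase_sub_le {E : Type*} [NormedAddCommGroup E]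
    [NormedSpace ℂ E] [CompleteSpace E] {s t : Set ℝ} (hs : IsCompact s) (ht : IsCompact t) :
    ∃ C, 0 ≤ C ∧ ∀ (g : ℝ → E) (K : ℝ), IsAmplitude 4 s K g → ∀ τ ∈ t, ∀ r β : ℝ, β ≠ 0 →
      2 * π * r * Real.exp τ = β →
        ‖(∫ x, cexp (I * mellinPhase r β x) • g x) -
            (1 / (I * β / (2 * π)) ^ (1 / 2 : ℂ) * cexp (I * mellinPhase r β τ)) • g τ‖ ≤
          C * K * |β| ^ (-(3 : ℝ) / 2) := by
  obtain ⟨T, hT, hT'⟩ := exists_isMorseCoordinate_exp_sub_one_sub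
  obtain ⟨C, hC, hbound⟩ := hT.exists_norm_integral_cexp_smul_sub_le (E := E) (ht.neg.add hs)
  refine ⟨C, hC, fun g K hg τ hτt r β hβ hτ => ?_⟩
  have hsupp : (τ + ·) ⁻¹' s ⊆ -t + s := fun u hu =>
    ⟨-τ, neg_mem_neg.2 hτt, τ + u, hu, neg_add_cancel_left τ u⟩
  have hmorse := hbound _ K ((hg.comp_const_add τ).mono_set hsupp) β hβ
  rw [hT', one_smul, add_zero] at hmorse
  rwa [integral_cexp_mellinPhase_smul_eq hτ, mul_comm (1 / _ : ℂ), mul_smul, ← smul_sub, norm_smul,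
    mul_comm I, Complex.norm_exp_ofReal_mul_I, one_mul]

theorem log_I_mul_ofReal (hβ : β ≠ 0) :
    Complex.log (I * β) = Complex.log ((-β : ℝ) : ℂ) - π * I / 2 := by
  rcases lt_or_gt_of_ne hβ with hneg | hpos
  · have hrot : I * β = ((-β : ℝ) : ℂ) * -I := by push_cast; ring
    rw [hrot, Complex.log_ofReal_mul (neg_pos.2 hneg) (by simp), Complex.log_neg_I,
      ← Complex.ofReal_log (neg_pos.2 hneg).le]
    ring
  · have hrot : ((-β : ℝ) : ℂ) = (β : ℂ) * -1 := by push_cast; ring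
    rw [hrot, mul_comm I, Complex.log_ofReal_mul hpos (by simp),
      Complex.log_ofReal_mul hpos (by simp), Complex.log_I, Complex.log_neg_one]
    ring

theorem sqrt_two_pi_mul_e_div_cpow (hβ : β ≠ 0) :
    ((√(2 * π) : ℝ) : ℂ) * e (1 / 8) / ((-β : ℝ) : ℂ) ^ ((1 : ℂ) / 2) =
      1 / (I * β / (2 * π)) ^ (1 / 2 : ℂ) := by
  have hsqrt : ((√(2 * π) : ℝ) : ℂ) = cexp ((Real.log (2 * π) / 2 : ℝ) : ℂ) := by
    rw [← Complex.ofReal_exp, Real.sqrt_eq_rpow, Real.rpow_def_of_pos Real.two_pi_pos]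
    ring_nf
  have hlog : Complex.log (I * β / (2 * π)) =
      Complex.log ((-β : ℝ) : ℂ) - π * I / 2 - Real.log (2 * π) := by
    have hscale : I * β / (2 * π) = (((2 * π)⁻¹ : ℝ) : ℂ) * (I * β) := by push_cast; ring
    rw [hscale, Complex.log_ofReal_mul (by positivity) (by simp [hβ]), Real.log_inv,
      log_I_mul_ofReal hβ]
    push_cast
    ring
  rw [hsqrt, e, Complex.cpow_def_of_ne_zero (by exact_mod_cast neg_ne_zero.2 hβ),
    Complex.cpow_def_of_ne_zero (by simp [hβ, Real.pi_ne_zero]), hlog, ← Complex.exp_add,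
    ← Complex.exp_sub, one_div (cexp _), ← Complex.exp_neg]
  congr 1
  push_cast
  ring

theorem cpow_eq_cexp_mellinPhase_log (hz : 0 < β / (2 * π * r)) :
    ((β / (2 * π * Real.exp 1 * r) : ℝ) : ℂ) ^ (I * (β : ℂ)) =
      cexp (I * mellinPhase r β (Real.log (β / (2 * π * r)))) := by
  have hr : r ≠ 0 := fun h => by simp [h] at hz
  have hpos : 0 < β / (2 * π * r) / Real.exp 1 := div_pos hz (Real.exp_pos 1)
  rw [show β / (2 * π * Real.exp 1 * r) = β / (2 * π * r) / Real.exp 1 by field_simp,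
    Complex.cpow_def_of_ne_zero (by exact_mod_cast hpos.ne'), ← Complex.ofReal_log hpos.le,
    Real.log_div hz.ne' (Real.exp_pos 1).ne', Real.log_exp, mellinPhase, Real.exp_log hz,
    mul_div_cancel₀ β (by simp [hr, Real.pi_ne_zero])]
  congr 1
  push_cast
  ring

theorem mellinAmplitude_log (σ : ℝ) (U : ℝ → ℝ) {z : ℝ} (hz : 0 < z) :
    mellinAmplitude σ U (Real.log z) = ((z ^ σ * U z : ℝ) : ℂ) := by
  rw [mellinAmplitude, Real.exp_log hz, Real.rpow_def_of_pos hz, mul_comm σ, smul_eq_mul]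

theorem mul_max_le_abs_of_le_div {c : ℝ} (hc : 0 < c) (hr : r ≠ 0)
    (hz : c ≤ β / (2 * π * r)) : min 1 (2 * π * c) * max |β| |r| ≤ |β| := by
  have hβr : 2 * π * c * |r| ≤ |β| := by
    calc 2 * π * c * |r| = 2 * π * |r| * c := by ring
      _ ≤ 2 * π * |r| * |β / (2 * π * r)| := by gcongr; exact hz.trans (le_abs_self _)
      _ = |β| := (abs_eq_mul_abs_div hr β).symm
  rw [mul_max_of_nonneg _ _ (by positivity)]
  refine max_le (mul_le_of_le_one_left (abs_nonneg β) (min_le_left _ _)) (le_trans ?_ hβr)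
  gcongr
  exact min_le_right _ _

theorem exists_norm_Udag_le_of_notMem (σ : ℝ) (ha : 0 < a) (hb : 0 < b) :
    ∃ C, ∀ (U : ℝ → ℝ) (K : ℝ), IsAmplitude 2 (Icc a b) K U → ∀ r β : ℝ, r ≠ 0 →
      β / (2 * π * r) ∉ Icc (a / 2) (2 * b) →
        ‖Udag U r (σ + I * β)‖ ≤ C * K * max |β| |r| ^ (-(3 : ℝ) / 2) := by
  obtain ⟨M, -, hamp⟩ := exists_isAmplitude_mellinAmplitude 2 σ ha b
  obtain ⟨C, hbound⟩ := exists_norm_integral_mellinPhase_le (E := ℂ) ha hb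
  refine ⟨C * M, fun U K hU r β hr hz => ?_⟩
  rw [Udag_eq_integral_mellinPhase, mul_assoc C]
  exact hbound _ _ (hamp U K hU) r β hr hz

theorem exists_norm_Udag_sub_le_of_mem (σ : ℝ) (ha : 0 < a) (b : ℝ) {c d : ℝ} (hc : 0 < c) :
    ∃ C, ∀ (U : ℝ → ℝ) (K : ℝ), IsAmplitude 4 (Icc a b) K U → ∀ r β : ℝ,
      β / (2 * π * r) ∈ Icc c d →
        ‖Udag U r (σ + I * β)
            - ((√(2 * π) : ℝ) : ℂ) * e (1 / 8) / ((-β : ℝ) : ℂ) ^ ((1 : ℂ) / 2)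
              * ((β / (2 * π * Real.exp 1 * r) : ℝ) : ℂ) ^ (I * (β : ℂ))
              * (((β / (2 * π * r)) ^ σ * U (β / (2 * π * r)) : ℝ) : ℂ)‖ ≤
          C * K * max |β| |r| ^ (-(3 : ℝ) / 2) := by
  obtain ⟨M, hM, hamp⟩ := exists_isAmplitude_mellinAmplitude 4 σ ha b
  obtain ⟨C, hC, hbound⟩ := exists_norm_integral_mellinPhase_sub_le (E := ℂ)
    (isCompact_Icc (a := Real.log a) (b := Real.log b))
    (isCompact_Icc (a := Real.log c) (b := Real.log d))
  set q := min 1 (2 * π * c)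
  have hq : 0 < q := lt_min one_pos (by positivity)
  refine ⟨C * M * q ^ (-(3 : ℝ) / 2), fun U K hU r β hz => ?_⟩
  have hz0 : 0 < β / (2 * π * r) := hc.trans_le hz.1
  have hK := hU.bound_nonneg
  obtain ⟨hβ, hr⟩ : β ≠ 0 ∧ r ≠ 0 := by
    constructor <;> rintro rfl <;> simp at hz0
  have hstat : 2 * π * r * Real.exp (Real.log (β / (2 * π * r))) = β := by
    rw [Real.exp_log hz0, mul_div_cancel₀ β (by simp [hr, Real.pi_ne_zero])]
  have hmain := hbound _ _ (hamp U K hU) _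
    ⟨Real.log_le_log hc hz.1, Real.log_le_log hz0 hz.2⟩ r β hβ hstat
  rw [smul_eq_mul, mellinAmplitude_log σ U hz0, ← cpow_eq_cexp_mellinPhase_log hz0,
    ← sqrt_two_pi_mul_e_div_cpow hβ, ← Udag_eq_integral_mellinPhase] at hmain
  refine hmain.trans ?_
  have hm : 0 < max |β| |r| := lt_max_of_lt_right (abs_pos.2 hr)
  calc C * (M * K) * |β| ^ (-(3 : ℝ) / 2)
      ≤ C * (M * K) * (q * max |β| |r|) ^ (-(3 : ℝ) / 2) := by
        refine mul_le_mul_of_nonneg_left (Real.rpow_le_rpow_of_nonpos (by positivity)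
          (mul_max_le_abs_of_le_div hc hr hz.1) (by norm_num)) (by positivity)
    _ = C * M * q ^ (-(3 : ℝ) / 2) * K * max |β| |r| ^ (-(3 : ℝ) / 2) := by
        rw [Real.mul_rpow hq.le hm.le]
        ring

end FourierMellin

theorem stmt7_general (a b σ : ℝ) (ha : 0 < a) (hab : a ≤ b) :
    ∃ C > 0, ∀ (U : ℝ → ℝ) (K : ℝ), IsAmplitude 4 (Icc a b) K U → ∀ r β : ℝ, r ≠ 0 → β ≠ 0 →
      ‖Udag U r (σ + I * β)
          - ((√(2 * π) : ℝ) : ℂ) * e (1 / 8) / ((-β : ℝ) : ℂ) ^ ((1 : ℂ) / 2)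
            * ((β / (2 * π * Real.exp 1 * r) : ℝ) : ℂ) ^ (I * (β : ℂ))
            * (((β / (2 * π * r)) ^ σ * U (β / (2 * π * r)) : ℝ) : ℂ)‖ ≤
        C * K * min (|β| ^ (-(3 : ℝ) / 2)) (|r| ^ (-(3 : ℝ) / 2)) := by
  obtain ⟨C₁, hfar⟩ := exists_norm_Udag_le_of_notMem σ ha (ha.trans_le hab)
  obtain ⟨C₂, hnear⟩ :=
    exists_norm_Udag_sub_le_of_mem (d := 2 * b) σ ha b (half_pos ha)
  refine ⟨max 1 (max C₁ C₂), by positivity, fun U K hU r β hr hβ => ?_⟩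
  have hK := hU.bound_nonneg
  have hmax : max |β| |r| ^ (-(3 : ℝ) / 2) =
      min (|β| ^ (-(3 : ℝ) / 2)) (|r| ^ (-(3 : ℝ) / 2)) :=
    (Real.antitoneOn_rpow_Ioi_of_exponent_nonpos (by norm_num)).map_max
      (abs_pos.2 hβ) (abs_pos.2 hr)
  rw [← hmax]
  by_cases hz : β / (2 * π * r) ∈ Icc (a / 2) (2 * b)
  · refine (hnear U K hU r β hz).trans ?_
    gcongr
    exact (le_max_right _ _).trans (le_max_right _ _)
  · have hU0 : U (β / (2 * π * r)) = 0 := hU.eq_zero_of_notMem fun h =>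
      hz ⟨by linarith [h.1], by linarith [h.2]⟩
    rw [hU0, mul_zero, Complex.ofReal_zero, mul_zero, sub_zero]
    refine (hfar U K (hU.mono_order (by norm_num)) r β hr hz).trans ?_
    gcongr
    exact (le_max_left _ _).trans (le_max_right _ _)

/-- Stationary phase asymptotic for the Fourier–Mellin transform (Lemma 5 of Munshi):
for `U` smooth supported in `[a,b] ⊂ (0,∞)` with `|U^{(j)}| ≤ K_j`, and `s = σ + iβ`,
`U†(r,s)` equals `(√(2π)e(1/8)/√(−β)) (β/(2πer))^{iβ} U₀(σ, β/(2πr))` up to an error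
`O(min{|β|^{−3/2}, |r|^{−3/2}})`, where `U₀(σ,x) = x^σ U(x)`. -/
theorem stmt7 (a b σ : ℝ) (ha : 0 < a) (hab : a ≤ b) (K : ℕ → ℝ) :
    ∃ C > 0, ∀ U : ℝ → ℝ, ContDiff ℝ (⊤ : ℕ∞) U → tsupport U ⊆ Set.Icc a b →
      (∀ j : ℕ, ∀ x : ℝ, |iteratedDeriv j U x| ≤ K j) →
      ∀ r β : ℝ, r ≠ 0 → β ≠ 0 →
        ‖Udag U r (σ + Complex.I * β)
            - ((Real.sqrt (2 * Real.pi) : ℝ) : ℂ) * e (1/8) / (((-β : ℝ) : ℂ) ^ ((1:ℂ)/2))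
              * (((β / (2 * Real.pi * Real.exp 1 * r) : ℝ) : ℂ)) ^ (Complex.I * (β : ℂ))
              * ((((β / (2 * Real.pi * r)) ^ σ * U (β / (2 * Real.pi * r)) : ℝ)) : ℂ)‖
          ≤ C * min (|β| ^ (-(3:ℝ)/2)) (|r| ^ (-(3:ℝ)/2)) := by
  obtain ⟨C, hC, h⟩ := stmt7_general a b σ ha hab
  obtain ⟨M, hM, hamp⟩ := exists_isAmplitude_of_norm_iteratedDeriv_le (F := ℝ) 4 (Icc a b) K
  exact ⟨C * M, mul_pos hC hM, fun U hU hsupp hK => h U M (hamp U (contDiff_infty.1 hU 4) hsupp hK)⟩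
end

section
/- Let [a,b] ⊂ (0,∞) and let U : ℝ → ℝ be a smooth function supported in [a,b] with |U^{(j)}(x)| ≤ K_j for all j ≥ 0 and all x. Fix σ ∈ ℝ and a nonnegative integer j. Then there is a constant C, depending only on a, b, σ, j and finitely many of the K_i, such that for all real r and real β, writing s = σ + iβ and U†(r,s) = ∫_0^∞ U(x) e(−rx) x^{s−1} dx, one has |U†(r,s)| ≤ C · min{ ((1+|β|)/|r|)^j , ((1+|r|)/|β|)^j } (where a quotient with zero denominator is interpreted as +∞). -/
open Complex Real

/-!
Integrating the derivative of `U(x) e(-rx) x^s` over `(0, ∞)` gives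
`U'†(r, s + 1) = 2πir U†(r, s + 1) - s U†(r, s)`. Solved for the term with the factor `r`, this
gains `(1 + |β|) / |r|` at the cost of replacing `U` by `U'` or `s` by `s - 1`; solved for the term
with the factor `s`, it gains `(1 + |r|) / |β|` at the cost of a shift to `s + 1`. All shifts are
real, so `β` is unchanged, and `j` rounds of either recursion end in the trivial bound.
-/

open MeasureTheory Set

section Mellin

variable {E : Type*} [NormedAddCommGroup E] [NormedSpace ℂ E] {f : ℝ → E}

lemma hasDerivAt_ofReal_cpow_of_pos {x : ℝ} (hx : 0 < x) (s : ℂ) :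
    HasDerivAt (fun y : ℝ ↦ (y : ℂ) ^ s) (s * (x : ℂ) ^ (s - 1)) x := by
  simpa using ((hasDerivAt_id (x : ℂ)).cpow_const (c := s)
    (Or.inl (by simpa using hx))).comp_ofReal

lemma contDiff_ofReal_cpow_smul {n : WithTop ℕ∞} (hf : ContDiff ℝ n f) (hpos : tsupport f ⊆ Ioi 0)
    (s : ℂ) : ContDiff ℝ n fun x : ℝ ↦ (x : ℂ) ^ s • f x := by
  refine contDiff_iff_contDiffAt.2 fun x ↦ ?_
  by_cases hx : x ∈ tsupport f
  swap
  · refine (contDiffAt_const (c := 0)).congr_of_eventuallyEq ?_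
    filter_upwards [notMem_tsupport_iff_eventuallyEq.1 hx] with y hy
    rw [hy, Pi.zero_apply, smul_zero]
  have hx0 : 0 < x := hpos hx
  have hpow : ContDiffAt ℂ n (fun z : ℂ ↦ z ^ s) x :=
    (analyticAt_id.cpow analyticAt_const (Or.inl (by simpa using hx0))).contDiffAt
  exact ((hpow.restrict_scalars ℝ).comp x ofRealCLM.contDiff.contDiffAt).smul hf.contDiffAt

lemma mellinConvergent_of_hasCompactSupport (hf : Continuous f) (hc : HasCompactSupport f)
    (hpos : tsupport f ⊆ Ioi 0) (s : ℂ) : MellinConvergent f s :=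
  have hcont := (contDiff_ofReal_cpow_smul (contDiff_zero.2 hf) hpos (s - 1)).continuous
  (hcont.integrable_of_hasCompactSupport hc.smul_left).integrableOn

theorem mellin_deriv [CompleteSpace E] (hf : ContDiff ℝ 1 f) (hc : HasCompactSupport f)
    (hpos : tsupport f ⊆ Ioi 0) (s : ℂ) : mellin (deriv f) (s + 1) = -(s • mellin f s) := by
  have hderiv : ∀ x ∈ Ioi (0 : ℝ), deriv (fun y : ℝ ↦ (y : ℂ) ^ s • f y) x =
      (x : ℂ) ^ (s + 1 - 1) • deriv f x + s • (x : ℂ) ^ (s - 1) • f x := fun x hx ↦ by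
    rw [add_sub_cancel_right, smul_smul]
    exact ((hasDerivAt_ofReal_cpow_of_pos hx s).smul
      (hf.differentiable one_ne_zero x).hasDerivAt).deriv
  have hzero : f 0 = 0 := image_eq_zero_of_notMem_tsupport fun h ↦ self_notMem_Ioi (hpos h)
  have hconv' : MellinConvergent (deriv f) (s + 1) :=
    mellinConvergent_of_hasCompactSupport (hf.continuous_deriv le_rfl) hc.deriv
      (tsupport_deriv_subset.trans hpos) _
  have hconv : MellinConvergent f s :=
    mellinConvergent_of_hasCompactSupport hf.continuous hc hpos s
  rw [eq_neg_iff_add_eq_zero]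
  calc mellin (deriv f) (s + 1) + s • mellin f s
      = ∫ x in Ioi (0 : ℝ), deriv (fun y : ℝ ↦ (y : ℂ) ^ s • f y) x := by
        rw [setIntegral_congr_fun measurableSet_Ioi hderiv, mellin, mellin, ← integral_smul]
        exact (integral_add hconv' (hconv.smul s)).symm
    _ = 0 := by
        have h := HasCompactSupport.integral_Ioi_deriv_eq
          (contDiff_ofReal_cpow_smul hf hpos s) hc.smul_left 0
        rw [h, hzero, smul_zero, neg_zero]

lemma norm_mellin_le {a b M : ℝ} (ha : 0 < a) (hsupp : Function.support f ⊆ Icc a b)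
    (hM : ∀ x, ‖f x‖ ≤ M) (s : ℂ) :
    ‖mellin f s‖ ≤ M * ∫ x in Icc a b, x ^ (s.re - 1) := by
  have hrestrict : mellin f s = ∫ x in Icc a b, (x : ℂ) ^ (s - 1) • f x :=
    setIntegral_eq_of_subset_of_forall_sdiff_eq_zero measurableSet_Ioi
      (fun x hx ↦ ha.trans_le hx.1) fun x hx ↦ by
        rw [Function.notMem_support.1 fun h ↦ hx.2 (hsupp h), smul_zero]
  have hdom : IntegrableOn (fun x : ℝ ↦ M * x ^ (s.re - 1)) (Icc a b) :=
    (continuousOn_const.mul (continuousOn_id.rpow_const fun x hx ↦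
      Or.inl (ha.trans_le hx.1).ne')).integrableOn_Icc
  rw [hrestrict, ← integral_const_mul]
  refine norm_integral_le_of_norm_le hdom ((ae_restrict_iff' measurableSet_Icc).2 (.of_forall ?_))
  intro x hx
  have hx0 : 0 < x := ha.trans_le hx.1
  rw [norm_smul, norm_cpow_eq_rpow_re_of_pos hx0, sub_re, one_re, mul_comm]
  gcongr
  exact hM x

end Mellin

lemma norm_e (x : ℝ) : ‖e x‖ = 1 := by
  have harg : (2 * π * I * x : ℂ) = ((2 * π * x : ℝ) : ℂ) * I := by push_cast; ring
  rw [e, harg, norm_exp_ofReal_mul_I]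

lemma contDiff_e {n : WithTop ℕ∞} : ContDiff ℝ n e :=
  (contDiff_const.mul ofRealCLM.contDiff).cexp

lemma hasDerivAt_e (x : ℝ) : HasDerivAt e (2 * π * I * e x) x :=
  (ofRealCLM.hasDerivAt.const_mul (2 * π * I)).cexp.congr_deriv (by simp [e, mul_comm])

/-- The modulated function `x ↦ U(x) e(-rx)`, whose Mellin transform is `s ↦ U†(r, s)`. -/
noncomputable def modulate (U : ℝ → ℝ) (r : ℝ) (x : ℝ) : ℂ :=
  U x * e (-(r * x))

section Udag

variable {U : ℝ → ℝ}

lemma Udag_eq_mellin_modulate (U : ℝ → ℝ) (r : ℝ) (s : ℂ) :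
    Udag U r s = mellin (modulate U r) s := by
  simp only [Udag, mellin, modulate, smul_eq_mul, mul_comm]

lemma norm_modulate (U : ℝ → ℝ) (r x : ℝ) : ‖modulate U r x‖ = |U x| := by
  rw [modulate, norm_mul, norm_e, mul_one, norm_real, Real.norm_eq_abs]

lemma support_modulate (U : ℝ → ℝ) (r : ℝ) :
    Function.support (modulate U r) = Function.support U := by
  ext x
  rw [Function.mem_support, Function.mem_support, ← norm_ne_zero_iff, norm_modulate, abs_ne_zero]

lemma tsupport_modulate (U : ℝ → ℝ) (r : ℝ) : tsupport (modulate U r) = tsupport U := by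
  rw [tsupport, tsupport, support_modulate]

lemma hasCompactSupport_modulate (hc : HasCompactSupport U) (r : ℝ) :
    HasCompactSupport (modulate U r) := by
  rwa [HasCompactSupport, tsupport_modulate]

lemma contDiff_modulate {n : WithTop ℕ∞} (hU : ContDiff ℝ n U) (r : ℝ) :
    ContDiff ℝ n (modulate U r) :=
  (ofRealCLM.contDiff.comp hU).mul (contDiff_e.comp (contDiff_const.mul contDiff_id).neg)

lemma deriv_modulate (hU : Differentiable ℝ U) (r : ℝ) :
    deriv (modulate U r) =
      fun x ↦ modulate (deriv U) r x - (2 * π * I * r) • modulate U r x := by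
  funext x
  have hchar : HasDerivAt (fun y : ℝ ↦ e (-(r * y))) (-r • (2 * π * I * e (-(r * x)))) x :=
    (hasDerivAt_e _).scomp x (hasDerivAt_const_mul r).neg
  refine ((hU x).hasDerivAt.ofReal_comp.mul hchar).deriv.trans ?_
  simp only [modulate, real_smul, smul_eq_mul, ofReal_neg]
  ring

theorem Udag_deriv (hU : ContDiff ℝ 1 U) (hc : HasCompactSupport U)
    (hpos : tsupport U ⊆ Ioi 0) (r : ℝ) (s : ℂ) :
    Udag (deriv U) r (s + 1) = 2 * π * I * r * Udag U r (s + 1) - s * Udag U r s := by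
  have hconv : MellinConvergent (modulate U r) (s + 1) :=
    mellinConvergent_of_hasCompactSupport (contDiff_modulate hU r).continuous
      (hasCompactSupport_modulate hc r) (by rwa [tsupport_modulate]) _
  have hconv' : MellinConvergent (modulate (deriv U) r) (s + 1) :=
    mellinConvergent_of_hasCompactSupport
      (contDiff_modulate (contDiff_zero.2 (hU.continuous_deriv le_rfl)) r).continuous
      (hasCompactSupport_modulate hc.deriv r)
      (by rw [tsupport_modulate]; exact tsupport_deriv_subset.trans hpos) _
  have hparts := mellin_deriv (contDiff_modulate hU r) (hasCompactSupport_modulate hc r)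
    (by rwa [tsupport_modulate]) s
  rw [deriv_modulate (hU.differentiable one_ne_zero),
    (hasMellin_sub hconv' (hconv.const_smul _)).2, mellin_const_smul, smul_eq_mul,
    smul_eq_mul] at hparts
  simp only [Udag_eq_mellin_modulate]
  linear_combination hparts

lemma norm_Udag_le {a b M : ℝ} (ha : 0 < a) (hsupp : tsupport U ⊆ Icc a b)
    (hM : ∀ x, |U x| ≤ M) (r : ℝ) (s : ℂ) :
    ‖Udag U r s‖ ≤ M * ∫ x in Icc a b, x ^ (s.re - 1) := by
  rw [Udag_eq_mellin_modulate]
  refine norm_mellin_le ha ?_ (fun x ↦ (norm_modulate U r x).trans_le (hM x)) s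
  rw [support_modulate]
  exact (subset_tsupport U).trans hsupp

lemma norm_two_pi_I_mul (r : ℝ) : ‖(2 * π * I * r : ℂ)‖ = 2 * π * |r| := by
  simp [abs_of_pos pi_pos]

theorem abs_mul_norm_Udag_le (hU : ContDiff ℝ 1 U) (hc : HasCompactSupport U)
    (hpos : tsupport U ⊆ Ioi 0) (r : ℝ) (s : ℂ) :
    |r| * ‖Udag U r s‖ ≤ (1 + |s.re - 1|) * (1 + |s.im|) *
      (‖Udag (deriv U) r s‖ + ‖Udag U r (s - 1)‖) := by
  have hparts : 2 * π * I * r * Udag U r s = Udag (deriv U) r s + (s - 1) * Udag U r (s - 1) := by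
    have h := Udag_deriv hU hc hpos r (s - 1)
    rw [sub_add_cancel] at h
    linear_combination -h
  have hs : ‖s - 1‖ ≤ (1 + |s.re - 1|) * (1 + |s.im|) := by
    have h := norm_le_abs_re_add_abs_im (s - 1)
    simp only [sub_re, one_re, sub_im, one_im, sub_zero] at h
    nlinarith [mul_nonneg (abs_nonneg (s.re - 1)) (abs_nonneg s.im)]
  have hone : 1 ≤ (1 + |s.re - 1|) * (1 + |s.im|) :=
    one_le_mul_of_one_le_of_one_le (by simp) (by simp)
  calc |r| * ‖Udag U r s‖
      ≤ 2 * π * |r| * ‖Udag U r s‖ := by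
        gcongr
        exact le_mul_of_one_le_left (abs_nonneg r) (by linarith [pi_gt_three])
    _ = ‖Udag (deriv U) r s + (s - 1) * Udag U r (s - 1)‖ := by
        rw [← hparts, norm_mul, norm_two_pi_I_mul]
    _ ≤ 1 * ‖Udag (deriv U) r s‖ + ‖s - 1‖ * ‖Udag U r (s - 1)‖ := by
        rw [one_mul, ← norm_mul]
        exact norm_add_le _ _
    _ ≤ _ := by
        rw [mul_add]
        gcongr

theorem abs_im_mul_norm_Udag_le (hU : ContDiff ℝ 1 U) (hc : HasCompactSupport U)
    (hpos : tsupport U ⊆ Ioi 0) (r : ℝ) (s : ℂ) :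
    |s.im| * ‖Udag U r s‖ ≤ 2 * π * (1 + |r|) *
      (‖Udag (deriv U) r (s + 1)‖ + ‖Udag U r (s + 1)‖) := by
  have hparts : s * Udag U r s = 2 * π * I * r * Udag U r (s + 1) - Udag (deriv U) r (s + 1) := by
    linear_combination Udag_deriv hU hc hpos r s
  have hone : 1 ≤ 2 * π * (1 + |r|) :=
    one_le_mul_of_one_le_of_one_le (by linarith [pi_gt_three]) (by simp)
  calc |s.im| * ‖Udag U r s‖
      ≤ ‖s‖ * ‖Udag U r s‖ := by
        gcongr
        exact abs_im_le_norm s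
    _ = ‖2 * π * I * r * Udag U r (s + 1) - Udag (deriv U) r (s + 1)‖ := by
        rw [← hparts, norm_mul]
    _ ≤ 2 * π * |r| * ‖Udag U r (s + 1)‖ + 1 * ‖Udag (deriv U) r (s + 1)‖ := by
        rw [one_mul, ← norm_two_pi_I_mul, ← norm_mul]
        exact norm_sub_le _ _
    _ ≤ 2 * π * (1 + |r|) * ‖Udag U r (s + 1)‖ +
          2 * π * (1 + |r|) * ‖Udag (deriv U) r (s + 1)‖ := by
        gcongr
        linarith
    _ = _ := by ring

end Udag

/-- `HasDerivBounds a b n K U` says that `U` is of class `C^n`, supported in `[a, b]`, with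
`|U^{(i)}| ≤ K i` for `i ≤ n`; it is the class over which the bounds below are uniform. -/
structure HasDerivBounds (a b : ℝ) (n : ℕ) (K : ℕ → ℝ) (U : ℝ → ℝ) : Prop where
  contDiff : ContDiff ℝ n U
  tsupport_subset : tsupport U ⊆ Icc a b
  abs_iteratedDeriv_le : ∀ i ≤ n, ∀ x, |iteratedDeriv i U x| ≤ K i

namespace HasDerivBounds

variable {a b : ℝ} {n m : ℕ} {K : ℕ → ℝ} {U : ℝ → ℝ}

lemma hasCompactSupport (h : HasDerivBounds a b n K U) : HasCompactSupport U :=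
  isCompact_Icc.of_isClosed_subset (isClosed_tsupport U) h.tsupport_subset

lemma tsupport_subset_Ioi (h : HasDerivBounds a b n K U) (ha : 0 < a) : tsupport U ⊆ Ioi 0 :=
  fun _ hx ↦ ha.trans_le (h.tsupport_subset hx).1

lemma of_le (h : HasDerivBounds a b n K U) (hmn : m ≤ n) : HasDerivBounds a b m K U where
  contDiff := h.contDiff.of_le (mod_cast hmn)
  tsupport_subset := h.tsupport_subset
  abs_iteratedDeriv_le i hi := h.abs_iteratedDeriv_le i (hi.trans hmn)

protected lemma deriv (h : HasDerivBounds a b (n + 1) K U) :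
    HasDerivBounds a b n (fun i ↦ K (i + 1)) (deriv U) where
  contDiff := (contDiff_succ_iff_deriv.1 h.contDiff).2.2
  tsupport_subset := tsupport_deriv_subset.trans h.tsupport_subset
  abs_iteratedDeriv_le i hi x := by
    rw [← iteratedDeriv_succ']
    exact h.abs_iteratedDeriv_le (i + 1) (by lia) x

end HasDerivBounds

theorem exists_pow_mul_norm_Udag_le {A B : ℝ → ℝ → ℝ} {c : ℝ → ℝ} {δ₁ δ₂ a b : ℝ}
    (hA : ∀ r β, 0 ≤ A r β) (hB : ∀ r β, 0 ≤ B r β) (hc : ∀ σ, 0 ≤ c σ)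
    (hstep : ∀ U : ℝ → ℝ, ContDiff ℝ 1 U → HasCompactSupport U → tsupport U ⊆ Ioi 0 →
      ∀ (r : ℝ) (s : ℂ), A r s.im * ‖Udag U r s‖ ≤
        c s.re * B r s.im * (‖Udag (deriv U) r (s + δ₁)‖ + ‖Udag U r (s + δ₂)‖))
    (ha : 0 < a) (n : ℕ) (K : ℕ → ℝ) (σ : ℝ) :
    ∃ C, ∀ U, HasDerivBounds a b n K U → ∀ (r : ℝ) (s : ℂ), s.re = σ →
      A r s.im ^ n * ‖Udag U r s‖ ≤ C * B r s.im ^ n := by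
  induction n generalizing K σ with
  | zero =>
    refine ⟨K 0 * ∫ x in Icc a b, x ^ (σ - 1), fun U hU r s hs ↦ ?_⟩
    simpa [hs] using norm_Udag_le ha hU.tsupport_subset
      (fun x ↦ by simpa using hU.abs_iteratedDeriv_le 0 le_rfl x) r s
  | succ n ih =>
    obtain ⟨C₁, hC₁⟩ := ih (fun i ↦ K (i + 1)) (σ + δ₁)
    obtain ⟨C₂, hC₂⟩ := ih K (σ + δ₂)
    refine ⟨c σ * (C₁ + C₂), fun U hU r s hs ↦ ?_⟩
    have hderiv := hC₁ (deriv U) hU.deriv r (s + δ₁) (by simp [hs])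
    have hshift := hC₂ U (hU.of_le n.le_succ) r (s + δ₂) (by simp [hs])
    simp only [add_im, ofReal_im, add_zero] at hderiv hshift
    have hrec := hstep U (hU.contDiff.of_le (by simp)) hU.hasCompactSupport
      (hU.tsupport_subset_Ioi ha) r s
    rw [hs] at hrec
    set α := A r s.im
    set γ := B r s.im
    have hα : 0 ≤ α := hA r s.im
    have hγ : 0 ≤ c σ * γ := mul_nonneg (hc σ) (hB r s.im)
    calc α ^ (n + 1) * ‖Udag U r s‖
        = α ^ n * (α * ‖Udag U r s‖) := by ring
      _ ≤ α ^ n * (c σ * γ * (‖Udag (deriv U) r (s + δ₁)‖ + ‖Udag U r (s + δ₂)‖)) := by gcongr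
      _ = c σ * γ * (α ^ n * ‖Udag (deriv U) r (s + δ₁)‖ + α ^ n * ‖Udag U r (s + δ₂)‖) := by ring
      _ ≤ c σ * γ * (C₁ * γ ^ n + C₂ * γ ^ n) := by gcongr
      _ = c σ * (C₁ + C₂) * γ ^ (n + 1) := by ring

theorem exists_abs_pow_mul_norm_Udag_le {a b : ℝ} (ha : 0 < a) (n : ℕ) (K : ℕ → ℝ) (σ : ℝ) :
    ∃ C, ∀ U, HasDerivBounds a b n K U → ∀ (r : ℝ) (s : ℂ), s.re = σ →
      |r| ^ n * ‖Udag U r s‖ ≤ C * (1 + |s.im|) ^ n :=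
  exists_pow_mul_norm_Udag_le (A := fun r _ ↦ |r|) (B := fun _ β ↦ 1 + |β|)
    (c := fun σ ↦ 1 + |σ - 1|) (δ₁ := 0) (δ₂ := -1) (fun _ _ ↦ by positivity)
    (fun _ _ ↦ by positivity) (fun _ ↦ by positivity)
    (fun _ hU hc hpos r s ↦ by
      simpa [← sub_eq_add_neg] using abs_mul_norm_Udag_le hU hc hpos r s) ha n K σ

theorem exists_abs_im_pow_mul_norm_Udag_le {a b : ℝ} (ha : 0 < a) (n : ℕ) (K : ℕ → ℝ) (σ : ℝ) :
    ∃ C, ∀ U, HasDerivBounds a b n K U → ∀ (r : ℝ) (s : ℂ), s.re = σ →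
      |s.im| ^ n * ‖Udag U r s‖ ≤ C * (1 + |r|) ^ n :=
  exists_pow_mul_norm_Udag_le (A := fun _ β ↦ |β|) (B := fun r _ ↦ 1 + |r|)
    (c := fun _ ↦ 2 * π) (δ₁ := 1) (δ₂ := 1) (fun _ _ ↦ by positivity)
    (fun _ _ ↦ by positivity) (fun _ ↦ by positivity)
    (fun _ hU hc hpos r s ↦ by simpa using abs_im_mul_norm_Udag_le hU hc hpos r s) ha n K σ

lemma le_mul_div_pow_of_pow_mul_le {x y N C C' : ℝ} {n : ℕ} (hx : 0 < x) (hy : 0 ≤ y)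
    (h : x ^ n * N ≤ C * y ^ n) (hC : C ≤ C') : N ≤ C' * (y / x) ^ n := by
  rw [div_pow, ← mul_div_assoc, le_div_iff₀ (pow_pos hx n), mul_comm N]
  exact h.trans (by gcongr)

theorem stmt8_general (a b σ : ℝ) (j : ℕ) (ha : 0 < a) (K : ℕ → ℝ) :
    ∃ C > 0, ∀ U : ℝ → ℝ, HasDerivBounds a b j K U → ∀ r β : ℝ,
      (r ≠ 0 → ‖Udag U r (σ + Complex.I * β)‖ ≤ C * ((1 + |β|) / |r|) ^ j) ∧
      (β ≠ 0 → ‖Udag U r (σ + Complex.I * β)‖ ≤ C * ((1 + |r|) / |β|) ^ j) := by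
  obtain ⟨C₁, hC₁⟩ := exists_abs_pow_mul_norm_Udag_le (b := b) ha j K σ
  obtain ⟨C₂, hC₂⟩ := exists_abs_im_pow_mul_norm_Udag_le (b := b) ha j K σ
  refine ⟨max 1 (max C₁ C₂), by positivity, fun U hU r β ↦ ⟨fun hr ↦ ?_, fun hβ ↦ ?_⟩⟩
  · have h := hC₁ U hU r (σ + I * β) (by simp)
    exact le_mul_div_pow_of_pow_mul_le (abs_pos.2 hr) (by positivity) (by simpa using h) (by simp)
  · have h := hC₂ U hU r (σ + I * β) (by simp)
    exact le_mul_div_pow_of_pow_mul_le (abs_pos.2 hβ) (by positivity) (by simpa using h) (by simp)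

/-- Repeated integration by parts bound for the Fourier–Mellin transform: for `U` smooth
supported in `[a,b] ⊂ (0,∞)` with `|U^{(i)}| ≤ K_i`, and `s = σ + iβ`,
`|U†(r,s)| ≤ C · min{((1+|β|)/|r|)^j, ((1+|r|)/|β|)^j}`, a quotient with zero denominator
being interpreted as `+∞` (so each bound is only asserted when its denominator is nonzero). -/
theorem stmt8 (a b σ : ℝ) (j : ℕ) (ha : 0 < a) (hab : a ≤ b) (K : ℕ → ℝ) :
    ∃ C > 0, ∀ U : ℝ → ℝ, ContDiff ℝ (⊤ : ℕ∞) U → tsupport U ⊆ Set.Icc a b →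
      (∀ i : ℕ, ∀ x : ℝ, |iteratedDeriv i U x| ≤ K i) →
      ∀ r β : ℝ,
        (r ≠ 0 → ‖Udag U r (σ + Complex.I * β)‖ ≤ C * ((1 + |β|) / |r|) ^ j) ∧
        (β ≠ 0 → ‖Udag U r (σ + Complex.I * β)‖ ≤ C * ((1 + |r|) / |β|) ^ j) := by
  obtain ⟨C, hC, hbound⟩ := stmt8_general a b σ j ha K
  exact ⟨C, hC, fun U hU hsupp hK ↦ hbound U ⟨hU.of_le (mod_cast le_top), hsupp, fun i _ ↦ hK i⟩⟩
end

section
/- There is an absolute constant C > 0 with the following property. Let q̂₁, q̂₂ be positive integers and m₁, m₂, n integers, and define the character sum 𝔠 = Σ_{β mod q̂₁q̂₂} S(m₁, β; q̂₁) · S(m₂, β; q̂₂) · e(βn/(q̂₁q̂₂)), where S(m, n; c) = Σ_{x mod c, gcd(x,c)=1} e((mx + n·x̄)/c) is the Kloosterman sum and x̄ denotes the inverse of x modulo c. Then |𝔠| ≤ C · q̂₁ · q̂₂ · gcd(q̂₁, q̂₂, n). -/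
open Complex Real

/-- The Kloosterman sum `S(m,n;c) = Σ_{x mod c, (x,c)=1} e((mx + n·x̄)/c)`, where `x̄` is the
multiplicative inverse of `x` modulo `c`. -/
noncomputable def kloos (m n : ℤ) (c : ℕ) : ℂ :=
  ∑ x ∈ (Finset.range c).filter (fun x => Nat.gcd x c = 1),
    e (((m : ℝ) * (x : ℝ) + (n : ℝ) * ((((x : ZMod c)⁻¹).val : ℕ) : ℝ)) / (c : ℝ))

/-!
Opening both Kloosterman sums turns `𝔠` into a sum over pairs of units `(u, v)` of a unimodular
coefficient times `Σ_β e(βθ)`, where `θ = u⁻¹/q₁ + v⁻¹/q₂ + n/(q₁q₂)` in `ℝ/ℤ`. As `q₁q₂θ = 0`, the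
inner sum is `q₁q₂` if `θ = 0` and vanishes otherwise, so it remains to count the pairs with
`θ = 0`. Two of them differ by a pair whose first component is killed by both `q₁` and `q₂`, hence
by `gcd(q₁, q₂)`, and determines the second: there are at most `gcd(q₁, q₂)` such pairs.
Multiplying `θ = 0` by `lcm(q₁, q₂)` shows that there are none unless `gcd(q₁, q₂) ∣ n`.
-/

open Finset

lemma e_eq_toCircle (x : ℝ) : e x = (AddCircle.toCircle (x : UnitAddCircle) : ℂ) := by
  rw [AddCircle.toCircle_apply_mk, Circle.coe_exp, e]
  congr 1
  push_cast
  ring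

lemma e_intCast_div (q : ℕ) [NeZero q] (k : ℤ) :
    e (k / q) = (ZMod.toCircle (k : ZMod q) : ℂ) := by
  rw [e_eq_toCircle, ← ZMod.toAddCircle_intCast]
  rfl

lemma kloos_eq_sum_units (m n : ℤ) (q : ℕ) [NeZero q] :
    kloos m n q =
      ∑ u : (ZMod q)ˣ, (ZMod.toCircle (m * u + n * (u⁻¹ : (ZMod q)ˣ) : ZMod q) : ℂ) := by
  have coprime_of_mem {x : ℕ} (hx : x ∈ {x ∈ range q | Nat.gcd x q = 1}) : x.Coprime q :=
    (mem_filter.mp hx).2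
  refine sum_bij' (fun x hx ↦ ZMod.unitOfCoprime x (coprime_of_mem hx))
    (fun u _ ↦ (u : ZMod q).val) (fun _ _ ↦ mem_univ _) (fun u _ ↦ ?_) (fun x hx ↦ ?_)
    (fun u _ ↦ ?_) (fun x hx ↦ ?_)
  · exact mem_filter.mpr ⟨mem_range.mpr (ZMod.val_lt _), ZMod.val_coe_unit_coprime u⟩
  · rw [ZMod.coe_unitOfCoprime, ZMod.val_cast_of_lt (mem_range.mp (mem_filter.mp hx).1)]
  · ext
    rw [ZMod.coe_unitOfCoprime, ZMod.natCast_zmod_val]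
  · have hinv : (((x : ZMod q)⁻¹.val : ℕ) : ZMod q) =
        ((ZMod.unitOfCoprime x (coprime_of_mem hx))⁻¹ : (ZMod q)ˣ) := by
      rw [ZMod.natCast_zmod_val, ← ZMod.inv_coe_unit, ZMod.coe_unitOfCoprime]
    rw [ZMod.coe_unitOfCoprime, ← hinv]
    exact_mod_cast e_intCast_div q (m * x + n * (x : ZMod q)⁻¹.val)

open scoped Classical in
lemma sum_range_toCircle_nsmul {T : ℝ} (hT : T ≠ 0) {N : ℕ} {θ : AddCircle T} (hθ : N • θ = 0) :
    ∑ b ∈ range N, ((b • θ).toCircle : ℂ) = if θ = 0 then (N : ℂ) else 0 := by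
  split_ifs with h
  · simp [h]
  · have hne : (θ.toCircle : ℂ) ≠ 1 := fun h1 ↦ h <| AddCircle.injective_toCircle hT <| by
      rw [AddCircle.toCircle_zero, ← Circle.coe_eq_one, h1]
    have hpow : (θ.toCircle : ℂ) ^ N = 1 := by
      rw [← Circle.coe_pow, ← AddCircle.toCircle_nsmul, hθ, AddCircle.toCircle_zero, Circle.coe_one]
    simp only [AddCircle.toCircle_nsmul, Circle.coe_pow]
    rw [geom_sum_eq hne, hpow, sub_self, zero_div]

open scoped Classical in
lemma norm_sum_range_sum_mul_toCircle_nsmul_le {ι : Type*} {T : ℝ} (hT : T ≠ 0) {N : ℕ}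
    (s : Finset ι) {c : ι → ℂ} (hc : ∀ i ∈ s, ‖c i‖ ≤ 1) {θ : ι → AddCircle T}
    (hθ : ∀ i ∈ s, N • θ i = 0) :
    ‖∑ b ∈ range N, ∑ i ∈ s, c i * ((b • θ i).toCircle : ℂ)‖ ≤ N * #{i ∈ s | θ i = 0} := by
  have hsum (i : ι) (hi : i ∈ s) :
      ∑ b ∈ range N, c i * ((b • θ i).toCircle : ℂ) = if θ i = 0 then c i * N else 0 := by
    rw [← mul_sum, sum_range_toCircle_nsmul hT (hθ i hi), mul_ite, mul_zero]
  rw [sum_comm, sum_congr rfl hsum, ← sum_filter, mul_comm, ← nsmul_eq_mul]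
  refine (norm_sum_le_of_le _ fun i hi ↦ ?_).trans_eq (sum_const _)
  rw [norm_mul, Complex.norm_natCast]
  exact mul_le_of_le_one_left N.cast_nonneg (hc i (mem_filter.mp hi).1)

open scoped Classical in
lemma card_filter_add_eq_le_gcd {A B G : Type*} [AddCommGroup A] [AddCommGroup B] [AddCommGroup G]
    [Fintype A] [Fintype B] [IsAddCyclic A] {f : A →+ G} {g : B →+ G} (hf : Function.Injective f)
    (hg : Function.Injective g) (t : G) :
    #{p : A × B | f p.1 + g p.2 = t} ≤ (Fintype.card A).gcd (Fintype.card B) := by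
  obtain hempty | ⟨⟨a₀, b₀⟩, h₀⟩ := eq_empty_or_nonempty {p : A × B | f p.1 + g p.2 = t}
  · simp [hempty]
  simp only [mem_filter_univ] at h₀
  have hsub {p : A × B} (hp : f p.1 + g p.2 = t) : f (p.1 - a₀) = g (b₀ - p.2) := by
    rw [map_sub, map_sub, sub_eq_sub_iff_add_eq_add, hp, add_comm, h₀]
  refine (card_le_card_of_injOn (fun p ↦ p.1 - a₀) (fun p hp ↦ ?_) fun p hp p' hp' heq ↦ ?_).trans
    (IsAddCyclic.card_nsmul_eq_zero_le (α := A) (Nat.gcd_pos_of_pos_left _ Fintype.card_pos))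
  · have hA : Fintype.card A • (p.1 - a₀) = 0 := card_nsmul_eq_zero
    have hB : Fintype.card B • (p.1 - a₀) = 0 := hf <| by
      rw [map_nsmul, hsub (by simpa using hp), ← map_nsmul, card_nsmul_eq_zero, map_zero, map_zero]
    exact (mem_filter_univ _).mpr (gcd_nsmul_eq_zero.mpr ⟨hA, hB⟩)
  · simp only [coe_filter, mem_univ, true_and, Set.mem_ofPred_eq] at hp hp' heq
    have hfst : p.1 = p'.1 := sub_left_injective heq
    have hsnd : g p.2 = g p'.2 := add_left_cancel (a := f p.1) <| by rw [hp, hfst, hp']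
    exact Prod.ext hfst (hg hsnd)

lemma nsmul_toAddCircle_eq_zero {q N : ℕ} [NeZero q] (h : q ∣ N) (x : ZMod q) :
    N • ZMod.toAddCircle x = 0 := by
  rw [← map_nsmul, nsmul_eq_mul, (ZMod.natCast_eq_zero_iff N q).mpr h, zero_mul, map_zero]

section Frequency

variable (q₁ q₂ : ℕ) [NeZero q₁] [NeZero q₂]

/-- The frequency `u⁻¹/q₁ + v⁻¹/q₂ + n/(q₁q₂)` in `ℝ/ℤ` with which `β` enters the term of
`S(m₁,β;q₁) S(m₂,β;q₂) e(βn/(q₁q₂))` indexed by the pair of units `p = (u, v)`. -/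
noncomputable def kloosFrequency (n : ℤ) (p : (ZMod q₁)ˣ × (ZMod q₂)ˣ) : UnitAddCircle :=
  ZMod.toAddCircle (p.1⁻¹ : (ZMod q₁)ˣ).val + ZMod.toAddCircle (p.2⁻¹ : (ZMod q₂)ˣ).val +
    ZMod.toAddCircle (n : ZMod (q₁ * q₂))

variable {q₁ q₂}

lemma mul_nsmul_kloosFrequency_eq_zero (n : ℤ) (p : (ZMod q₁)ˣ × (ZMod q₂)ˣ) :
    (q₁ * q₂) • kloosFrequency q₁ q₂ n p = 0 := by
  simp only [kloosFrequency, nsmul_add, nsmul_toAddCircle_eq_zero (dvd_mul_right q₁ q₂),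
    nsmul_toAddCircle_eq_zero (dvd_mul_left q₂ q₁), nsmul_toAddCircle_eq_zero dvd_rfl, add_zero]

lemma gcd_dvd_of_kloosFrequency_eq_zero {n : ℤ} {p : (ZMod q₁)ˣ × (ZMod q₂)ˣ}
    (hp : kloosFrequency q₁ q₂ n p = 0) : (q₁.gcd q₂ : ℤ) ∣ n := by
  have hlcm : q₁.lcm q₂ • ZMod.toAddCircle (n : ZMod (q₁ * q₂)) = 0 := by
    simpa only [kloosFrequency, nsmul_add, nsmul_toAddCircle_eq_zero (Nat.dvd_lcm_left q₁ q₂),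
      nsmul_toAddCircle_eq_zero (Nat.dvd_lcm_right q₁ q₂), zero_add, nsmul_zero]
      using congrArg (q₁.lcm q₂ • ·) hp
  rw [← map_nsmul, ZMod.toAddCircle_eq_zero, nsmul_eq_mul] at hlcm
  have hdvd : (q₁.lcm q₂ * q₁.gcd q₂ : ℤ) ∣ q₁.lcm q₂ * n := by
    rw [mul_comm, ← Nat.cast_mul, Nat.gcd_mul_lcm]
    exact (ZMod.intCast_zmod_eq_zero_iff_dvd _ _).mp (by exact_mod_cast hlcm)
  exact Int.dvd_of_mul_dvd_mul_left
    (mod_cast Nat.lcm_ne_zero (NeZero.ne q₁) (NeZero.ne q₂)) hdvd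

open scoped Classical in
lemma card_filter_kloosFrequency_eq_zero_le_gcd (n : ℤ) :
    #{p | kloosFrequency q₁ q₂ n p = 0} ≤ q₁.gcd q₂ := by
  have hcard := card_filter_add_eq_le_gcd (ZMod.toAddCircle_injective q₁)
    (ZMod.toAddCircle_injective q₂) (-ZMod.toAddCircle (n : ZMod (q₁ * q₂)))
  rw [ZMod.card, ZMod.card] at hcard
  refine (card_le_card_of_injOn (fun p ↦ ((p.1⁻¹ : (ZMod q₁)ˣ).val, (p.2⁻¹ : (ZMod q₂)ˣ).val))
    (fun p hp ↦ ?_) fun p _ p' _ heq ↦ ?_).trans hcard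
  · simpa [kloosFrequency, add_eq_zero_iff_eq_neg] using hp
  · simpa [Prod.ext_iff, Units.ext_iff] using heq

open scoped Classical in
lemma card_filter_kloosFrequency_eq_zero_le_gcd_gcd (n : ℤ) :
    #{p | kloosFrequency q₁ q₂ n p = 0} ≤ Int.gcd (Int.gcd q₁ q₂) n := by
  obtain hempty | ⟨p, hp⟩ := eq_empty_or_nonempty {p | kloosFrequency q₁ q₂ n p = 0}
  · simp [hempty]
  have hdvd := gcd_dvd_of_kloosFrequency_eq_zero ((mem_filter_univ p).mp hp)
  rw [Int.gcd_natCast_natCast, Int.gcd_eq_natAbs_left hdvd, Int.natAbs_natCast]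
  exact card_filter_kloosFrequency_eq_zero_le_gcd n

lemma kloos_mul_kloos_mul_e (m₁ m₂ n : ℤ) (b : ℕ) :
    kloos m₁ b q₁ * kloos m₂ b q₂ * e (b * n / (q₁ * q₂)) =
      ∑ p : (ZMod q₁)ˣ × (ZMod q₂)ˣ, (ZMod.toCircle (m₁ * p.1 : ZMod q₁) *
        ZMod.toCircle (m₂ * p.2 : ZMod q₂) : ℂ) * (b • kloosFrequency q₁ q₂ n p).toCircle := by
  have htoCircle {q : ℕ} [NeZero q] (x : ZMod q) :
      ZMod.toCircle (b * x : ZMod q) = (ZMod.toAddCircle x).toCircle ^ b := by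
    rw [← nsmul_eq_mul, AddChar.map_nsmul_eq_pow]
    rfl
  have he : e (b * n / (q₁ * q₂)) = (ZMod.toCircle (b * n : ZMod (q₁ * q₂)) : ℂ) := by
    exact_mod_cast e_intCast_div (q₁ * q₂) (b * n)
  rw [kloos_eq_sum_units, kloos_eq_sum_units, Fintype.sum_mul_sum, ← Fintype.sum_prod_type',
    sum_mul, he]
  refine sum_congr rfl fun p _ ↦ ?_
  simp only [kloosFrequency, AddChar.map_add_eq_mul, Int.cast_natCast, htoCircle,
    AddCircle.toCircle_nsmul, AddCircle.toCircle_add, Circle.coe_mul, mul_pow]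
  ring

end Frequency

/-- Bound for the character sum
`𝔠 = Σ_{β mod q̂₁q̂₂} S(m₁,β;q̂₁) S(m₂,β;q̂₂) e(βn/(q̂₁q̂₂))`:
`|𝔠| ≤ C · q̂₁ q̂₂ · (q̂₁, q̂₂, n)`. -/
theorem stmt9 : ∃ C > 0, ∀ (q₁ q₂ : ℕ) (m₁ m₂ n : ℤ), 0 < q₁ → 0 < q₂ →
    ‖∑ β ∈ Finset.range (q₁ * q₂),
        kloos m₁ (β : ℤ) q₁ * kloos m₂ (β : ℤ) q₂ *
          e ((β : ℝ) * (n : ℝ) / ((q₁ : ℝ) * (q₂ : ℝ)))‖ ≤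
      C * (q₁ : ℝ) * (q₂ : ℝ) * ((Int.gcd ((Int.gcd (q₁ : ℤ) (q₂ : ℤ) : ℤ)) n : ℕ) : ℝ) := by
  refine ⟨1, one_pos, fun q₁ q₂ m₁ m₂ n h₁ h₂ ↦ ?_⟩
  classical
  have : NeZero q₁ := ⟨h₁.ne'⟩
  have : NeZero q₂ := ⟨h₂.ne'⟩
  simp only [kloos_mul_kloos_mul_e]
  calc
    _ ≤ ((q₁ * q₂ : ℕ) : ℝ) * #{p | kloosFrequency q₁ q₂ n p = 0} :=
      norm_sum_range_sum_mul_toCircle_nsmul_le one_ne_zero univ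
        (fun p _ ↦ by rw [norm_mul, Circle.norm_coe, Circle.norm_coe, one_mul])
        (fun p _ ↦ mul_nsmul_kloosFrequency_eq_zero n p)
    _ ≤ 1 * (q₁ : ℝ) * (q₂ : ℝ) * (Int.gcd (Int.gcd q₁ q₂) n : ℕ) := by
      rw [one_mul, Nat.cast_mul]
      gcongr
      exact card_filter_kloosFrequency_eq_zero_le_gcd_gcd n
end

section
/- There is an absolute constant C > 0 with the following property. Let t ≥ 2 and J ≥ 1 be real numbers with 2J ≤ t, and let τ₁, τ₂ ∈ [J, 2J] with τ₁ ≠ τ₂. Define A = 3/τ₁ − 1/(t+τ₁) + 1/(τ₂−τ₁), B = −3/τ₂ + 1/(t+τ₂) + 1/(τ₂−τ₁), and D = 1/(τ₁−τ₂). Then | A·B − D² + 6/(τ₁τ₂) | ≤ C/(J·t). -/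
/-!
Write `A = p + s`, `B = -q + s`, `D = -s` with `s = 1 / (τ₂ - τ₁)`, `p = 3 / τ₁ - 1 / (t + τ₁)` and
`q = 3 / τ₂ - 1 / (t + τ₂)`. The double pole `s ^ 2` cancels in
`A * B - D ^ 2 = (p - q) * s - p * q`, and the simple pole is removable, since divided differences
of `x ↦ 1 / x` and `x ↦ 1 / (t + x)` are, up to sign, products of their values. What remains is
`-6 / (τ₁ * τ₂)` plus terms with a factor `1 / (t + τ₁)` or `1 / (t + τ₂)`, each `O(1 / (J * t))`.
-/

section Identity

variable {K : Type*} [Field K] {a b t : K}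

theorem one_div_sub_one_div_mul_one_div_sub (ha : a ≠ 0) (hb : b ≠ 0) (hab : a ≠ b) :
    (1 / a - 1 / b) * (1 / (b - a)) = 1 / (a * b) := by
  have hba : b - a ≠ 0 := sub_ne_zero.mpr hab.symm
  field_simp

theorem hessian_det_eq (α β : K) (ha : a ≠ 0) (hb : b ≠ 0) (hta : t + a ≠ 0) (htb : t + b ≠ 0)
    (hab : a ≠ b) :
    (α / a - β / (t + a) + 1 / (b - a)) * (-α / b + β / (t + b) + 1 / (b - a)) -
        (1 / (a - b)) ^ 2 =
      (α - α ^ 2) / (a * b) + α * β * (1 / (a * (t + b)) + 1 / (b * (t + a))) -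
        (β + β ^ 2) / ((t + a) * (t + b)) := by
  have pole_at_zero := one_div_sub_one_div_mul_one_div_sub ha hb hab
  have pole_at_neg_t : (1 / (t + a) - 1 / (t + b)) * (1 / (b - a)) = 1 / ((t + a) * (t + b)) := by
    simpa only [add_sub_add_left_eq_sub] using
      one_div_sub_one_div_mul_one_div_sub hta htb (mt add_left_cancel hab)
  have sq_symm : (1 / (a - b)) ^ 2 = (1 / (b - a)) ^ 2 := by
    rw [one_div_pow, one_div_pow, sub_sq_comm]
  calc
    _ = α * ((1 / a - 1 / b) * (1 / (b - a))) -
          β * ((1 / (t + a) - 1 / (t + b)) * (1 / (b - a))) -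
          (α / a - β / (t + a)) * (α / b - β / (t + b)) := by
      rw [sq_symm]
      ring
    _ = α * (1 / (a * b)) - β * (1 / ((t + a) * (t + b))) -
          (α / a - β / (t + a)) * (α / b - β / (t + b)) := by
      rw [pole_at_zero, pole_at_neg_t]
    _ = _ := by
      simp only [div_eq_mul_inv, mul_inv]
      ring

end Identity

section Bound

variable {K : Type*} [Field K] [LinearOrder K] [IsStrictOrderedRing K] {J t : K}

theorem one_div_mul_add_le_one_div_mul {a b : K} (hJ : 0 < J) (ht : 0 < t) (ha : J ≤ a)
    (hb : 0 ≤ b) : 1 / (a * (t + b)) ≤ 1 / (J * t) := by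
  have htb : t ≤ t + b := le_add_of_nonneg_right hb
  have ha₀ : 0 ≤ a := hJ.le.trans ha
  gcongr

theorem stmt15_general {τ₁ τ₂ : K} (hJ : 0 < J) (ht : 0 < t) (hτ₁ : J ≤ τ₁) (hτ₂ : J ≤ τ₂)
    (hne : τ₁ ≠ τ₂) :
    |(3 / τ₁ - 1 / (t + τ₁) + 1 / (τ₂ - τ₁)) * (-3 / τ₂ + 1 / (t + τ₂) + 1 / (τ₂ - τ₁)) -
      (1 / (τ₁ - τ₂)) ^ 2 + 6 / (τ₁ * τ₂)| ≤ 6 / (J * t) := by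
  have hτ₁_pos : 0 < τ₁ := hJ.trans_le hτ₁
  have hτ₂_pos : 0 < τ₂ := hJ.trans_le hτ₂
  have htτ₁ : 0 < t + τ₁ := add_pos ht hτ₁_pos
  have htτ₂ : 0 < t + τ₂ := add_pos ht hτ₂_pos
  have error_eq :
      (3 / τ₁ - 1 / (t + τ₁) + 1 / (τ₂ - τ₁)) * (-3 / τ₂ + 1 / (t + τ₂) + 1 / (τ₂ - τ₁)) -
          (1 / (τ₁ - τ₂)) ^ 2 + 6 / (τ₁ * τ₂) =
        3 * (1 / (τ₁ * (t + τ₂))) + 3 * (1 / (τ₂ * (t + τ₁))) -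
          2 * (1 / ((t + τ₁) * (t + τ₂))) := by
    rw [hessian_det_eq 3 1 hτ₁_pos.ne' hτ₂_pos.ne' htτ₁.ne' htτ₂.ne' hne]
    ring
  have cross₁₂_le : 1 / (τ₁ * (t + τ₂)) ≤ 1 / (J * t) :=
    one_div_mul_add_le_one_div_mul hJ ht hτ₁ hτ₂_pos.le
  have cross₂₁_le : 1 / (τ₂ * (t + τ₁)) ≤ 1 / (J * t) :=
    one_div_mul_add_le_one_div_mul hJ ht hτ₂ hτ₁_pos.le
  have cross₁₂_pos : 0 < 1 / (τ₁ * (t + τ₂)) := by positivity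
  have cross₂₁_pos : 0 < 1 / (τ₂ * (t + τ₁)) := by positivity
  have shifted_pos : 0 < 1 / ((t + τ₁) * (t + τ₂)) := by positivity
  have shifted_le : 1 / ((t + τ₁) * (t + τ₂)) ≤ 1 / (J * t) :=
    one_div_mul_add_le_one_div_mul hJ ht (hτ₁.trans (le_add_of_nonneg_left ht.le)) hτ₂_pos.le
  rw [error_eq, ← mul_one_div 6 (J * t), abs_le]
  constructor <;> linarith

end Bound

/-- Hessian determinant computation for the two-variable phase: for `t ≥ 2`, `1 ≤ J`,
`2J ≤ t` and `τ₁ ≠ τ₂` in `[J, 2J]`, with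
`A = 3/τ₁ − 1/(t+τ₁) + 1/(τ₂−τ₁)`, `B = −3/τ₂ + 1/(t+τ₂) + 1/(τ₂−τ₁)`, `D = 1/(τ₁−τ₂)`,
one has `|A·B − D² + 6/(τ₁τ₂)| ≤ C/(J·t)` for an absolute constant `C`. -/
theorem stmt15 : ∃ C > 0, ∀ t J τ₁ τ₂ : ℝ, 2 ≤ t → 1 ≤ J → 2 * J ≤ t →
    τ₁ ∈ Set.Icc J (2 * J) → τ₂ ∈ Set.Icc J (2 * J) → τ₁ ≠ τ₂ →
    |(3 / τ₁ - 1 / (t + τ₁) + 1 / (τ₂ - τ₁)) *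
        (-3 / τ₂ + 1 / (t + τ₂) + 1 / (τ₂ - τ₁)) -
      (1 / (τ₁ - τ₂)) ^ 2 + 6 / (τ₁ * τ₂)| ≤ C / (J * t) :=
  ⟨6, by norm_num, fun _ _ _ _ ht hJ _ hτ₁ hτ₂ hne =>
    stmt15_general (by linarith) (by linarith) hτ₁.1 hτ₂.1 hne⟩
end
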